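/- arXiv:math/0107085 — 7 statements merged into one kernel-verified Lean document; each statement's English description precedes it below -/
import Mathlib

section
/- Kopell's Lemma: Let a < b be real numbers and let f and g be orientation-preserving C² diffeomorphisms of the half-open interval [a,b) (i.e., bijections of [a,b) onto itself, twice continuously differentiable with everywhere positive derivative, necessarily fixing a) such that f ∘ g = g ∘ f. If f has no fixed point in the open interval (a,b) and g has at least one fixed point in (a,b), then g is the identity map of [a,b). -/
/-!
Replacing `f` by its inverse if necessary, `f x < x` on `(a, b)`, so that all orbits of `f` tend
to `a`. The images `f^[n] p` of a fixed point `p` of `g` are fixed by `g` and accumulate at `a`,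
whence `g' a = 1`.

The intervals `f^[n] '' [f p, p]` do not overlap, so the ratio `(f^[n])' u / (f^[n])' v` for
`u, v ∈ [f p, p]` is bounded by some `M` that depends only on the variation of `log f'` on
`[a, p]`. Differentiating `f^[n] ∘ h = h ∘ f^[n]` for `h = g^[k]` gives
`h' u = h' (f^[n] u) * (f^[n])' u / (f^[n])' (h u)`, and letting `n → ∞` yields `h' u ≥ 1 / M`
on `[f p, p]`, uniformly in `k`. But a monotone self-map of a compact interval whose iterates do
not contract distances by more than a fixed factor is the identity.
-/

open Set Filter Topology

namespace Kopell

section SelfMap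

variable {α : Type*} {s : Set α} {f g : α → α}

theorem eqOn_comp_iterate (hg : MapsTo g s s) (hcomm : EqOn (f ∘ g) (g ∘ f) s) (n : ℕ) :
    EqOn (f ∘ g^[n]) (g^[n] ∘ f) s := by
  induction n with
  | zero => exact fun _ _ ↦ rfl
  | succ n ih => exact fun x hx ↦ (ih (hg hx)).trans (congrArg g^[n] (hcomm hx))

theorem eqOn_invFunOn_comp [Nonempty α] (hinj : InjOn f s) (hsurj : SurjOn f s s)
    (hgmaps : MapsTo g s s) (hcomm : EqOn (f ∘ g) (g ∘ f) s) :
    EqOn (Function.invFunOn f s ∘ g) (g ∘ Function.invFunOn f s) s := by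
  intro x hx
  have hx' := hsurj.mapsTo_invFunOn hx
  refine hinj (hsurj.mapsTo_invFunOn (hgmaps hx)) (hgmaps hx') ?_
  calc f (Function.invFunOn f s (g x))
    _ = g x := hsurj.rightInvOn_invFunOn (hgmaps hx)
    _ = g (f (Function.invFunOn f s x)) := by rw [hsurj.rightInvOn_invFunOn hx]
    _ = f (g (Function.invFunOn f s x)) := (hcomm hx').symm

theorem monotoneOn_iterate [Preorder α] (hf : MonotoneOn f s) (hmaps : MapsTo f s s) (n : ℕ) :
    MonotoneOn f^[n] s := by
  induction n with
  | zero => exact monotoneOn_id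
  | succ n ih => exact ih.comp hf hmaps

theorem exists_tendsto_iterate [ConditionallyCompleteLinearOrder α] [TopologicalSpace α]
    [OrderTopology α] (hf : MonotoneOn f s) (hmaps : MapsTo f s s) (hbelow : BddBelow s)
    (habove : BddAbove s) {x : α} (hx : x ∈ s) :
    ∃ l, Tendsto (fun n ↦ f^[n] x) atTop (𝓝 l) := by
  have hrange : range (fun n ↦ f^[n] x) ⊆ s := range_subset_iff.2 fun n ↦ hmaps.iterate n hx
  rcases le_total x (f x) with h | h
  · exact ⟨_, tendsto_atTop_ciSup (monotone_nat_of_le_succ fun n ↦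
      monotoneOn_iterate hf hmaps n hx (hmaps hx) h) (habove.mono hrange)⟩
  · exact ⟨_, tendsto_atTop_ciInf (antitone_nat_of_succ_le fun n ↦
      monotoneOn_iterate hf hmaps n (hmaps hx) hx h) (hbelow.mono hrange)⟩

theorem exists_mem_Icc_of_lt [LinearOrder α] {u : ℕ → α} {x : α} (hx : x ≤ u 0)
    (hlt : ∃ n, u n < x) : ∃ n, x ∈ Icc (u (n + 1)) (u n) := by
  by_contra! hnot
  obtain ⟨n, hn⟩ := hlt
  refine hn.not_ge ?_
  clear hn
  induction n with
  | zero => exact hx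
  | succ n ih => exact le_of_not_ge fun h ↦ hnot n ⟨h, ih⟩

theorem eqOn_id_of_dist_le_mul_dist_iterate {s : Set ℝ} {f : ℝ → ℝ} (hf : MonotoneOn f s)
    (hmaps : MapsTo f s s) (hbelow : BddBelow s) (habove : BddAbove s) {M : ℝ}
    (hM : ∀ n, ∀ x ∈ s, ∀ y ∈ s, dist x y ≤ M * dist (f^[n] x) (f^[n] y)) : EqOn f id s := by
  intro x hx
  obtain ⟨l, hl⟩ := exists_tendsto_iterate hf hmaps hbelow habove hx
  have hlim : Tendsto (fun n ↦ M * dist (f^[n] (f x)) (f^[n] x)) atTop (𝓝 (M * dist l l)) :=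
    ((hl.comp (tendsto_add_atTop_nat 1)).dist hl).const_mul M
  have hle := ge_of_tendsto' hlim fun n ↦ hM n _ (hmaps hx) _ hx
  rw [dist_self, mul_zero] at hle
  exact dist_le_zero.1 hle

end SelfMap

section Order

theorem forall_lt_or_forall_gt_of_forall_ne {X α : Type*} [TopologicalSpace X]
    [LinearOrder α] [TopologicalSpace α] [OrderClosedTopology α] {s : Set X} {f g : X → α}
    (hs : IsPreconnected s) (hf : ContinuousOn f s) (hg : ContinuousOn g s)
    (hne : ∀ x ∈ s, f x ≠ g x) : (∀ x ∈ s, f x < g x) ∨ ∀ x ∈ s, g x < f x := by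
  by_contra! h
  obtain ⟨⟨x, hx, hgf⟩, y, hy, hfg⟩ := h
  obtain ⟨z, hz, heq⟩ := hs.intermediate_value₂ hy hx hf hg hfg hgf
  exact hne z hz heq

theorem continuousOn_of_monotoneOn_of_surjOn {α β : Type*} [LinearOrder α] [TopologicalSpace α]
    [OrderTopology α] [LinearOrder β] [DenselyOrdered β] [TopologicalSpace β] [OrderTopology β]
    {s : Set α} {t : Set β} [s.OrdConnected] [t.OrdConnected] {f : α → β} (hf : MonotoneOn f s)
    (hmaps : MapsTo f s t) (hsurj : SurjOn f s t) : ContinuousOn f s := by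
  have hmono : Monotone (hmaps.restrict f s t) := fun x y hxy ↦ hf x.2 y.2 hxy
  have hcont := hmono.continuous_of_surjective (hmaps.restrict_surjective_iff.2 hsurj)
  exact continuousOn_iff_continuous_domRestrict.2 (continuous_subtype_val.comp hcont)

theorem strictMonoOn_invFunOn {α β : Type*} [LinearOrder α] [Nonempty α] [Preorder β]
    {s : Set α} {t : Set β} {f : α → β} (hf : StrictMonoOn f s) (hsurj : SurjOn f s t) :
    StrictMonoOn (Function.invFunOn f s) t := by
  intro x hx y hy hxy
  rw [← hf.lt_iff_lt (hsurj.mapsTo_invFunOn hx) (hsurj.mapsTo_invFunOn hy),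
    hsurj.rightInvOn_invFunOn hx, hsurj.rightInvOn_invFunOn hy]
  exact hxy

theorem apply_eq_of_isLeast_of_monotoneOn {α : Type*} [PartialOrder α] {s : Set α} {f : α → α}
    {a : α} (ha : IsLeast s a) (hf : MonotoneOn f s) (hmaps : MapsTo f s s) (hsurj : SurjOn f s s) :
    f a = a := by
  obtain ⟨x, hx, hxa⟩ := hsurj ha.1
  exact le_antisymm ((hf ha.1 hx (ha.2 hx)).trans_eq hxa) (ha.2 (hmaps ha.1))

end Order

section Derivative

variable {𝕜 : Type*} [NontriviallyNormedField 𝕜] {s t : Set 𝕜} {f g : 𝕜 → 𝕜} {a : 𝕜}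

theorem hasDerivWithinAt_iterate {f' : 𝕜 → 𝕜} (hf : ∀ x ∈ s, HasDerivWithinAt f (f' x) s x)
    (hmaps : MapsTo f s s) (n : ℕ) {x : 𝕜} (hx : x ∈ s) :
    HasDerivWithinAt f^[n] (∏ k ∈ Finset.range n, f' (f^[k] x)) s x := by
  induction n with
  | zero => simpa using hasDerivWithinAt_id x s
  | succ n ih =>
    rw [Function.iterate_succ', Finset.prod_range_succ_comm]
    exact (hf _ (hmaps.iterate n hx)).comp x ih (hmaps.iterate n)

theorem contDiffOn_iterate {n : WithTop ℕ∞} (hf : ContDiffOn 𝕜 n f s) (hmaps : MapsTo f s s)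
    (k : ℕ) : ContDiffOn 𝕜 n f^[k] s := by
  induction k with
  | zero => exact contDiffOn_id
  | succ k ih => exact ih.comp hf hmaps

theorem derivWithin_mul_derivWithin_of_eqOn_comp (hf : DifferentiableOn 𝕜 f s)
    (hg : DifferentiableOn 𝕜 g s) (hfmaps : MapsTo f s s) (hgmaps : MapsTo g s s)
    (hcomm : EqOn (f ∘ g) (g ∘ f) s) {x : 𝕜} (hx : x ∈ s) :
    derivWithin f s (g x) * derivWithin g s x = derivWithin g s (f x) * derivWithin f s x := by
  rw [← derivWithin_comp x (hf _ (hgmaps hx)) (hg x hx) hgmaps,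
    ← derivWithin_comp x (hg _ (hfmaps hx)) (hf x hx) hfmaps,
    derivWithin_congr hcomm (hcomm hx)]

theorem hasDerivWithinAt_of_local_left_inverse {f' : 𝕜} (hg : Tendsto g (𝓝[s] a) (𝓝[t] (g a)))
    (hf : HasDerivWithinAt f f' t (g a)) (hf' : f' ≠ 0) (ha : a ∈ s)
    (hfg : ∀ᶠ x in 𝓝[s] a, f (g x) = x) : HasDerivWithinAt g f'⁻¹ s a :=
  HasFDerivWithinAt.of_local_left_inverse
    (f' := ContinuousLinearEquiv.unitsEquivAut 𝕜 (Units.mk0 f' hf')) hg hf ha hfg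

theorem derivWithin_eq_one_of_frequently_fixed (hg : DifferentiableWithinAt 𝕜 g s a)
    (hfix : ∃ᶠ x in 𝓝[s \ {a}] a, g x = x) : derivWithin g s a = 1 := by
  by_contra hne
  have hsub : HasDerivWithinAt (fun x ↦ g x - x) (derivWithin g s a - 1) s a :=
    hg.hasDerivWithinAt.sub (hasDerivWithinAt_id a s)
  exact hfix ((hsub.eventually_ne (c := 0) (sub_ne_zero.2 hne)).mono fun x hx ↦ sub_ne_zero.1 hx)

end Derivative

section RealDerivative

variable {s D : Set ℝ} {f : ℝ → ℝ}

theorem strictMonoOn_of_derivWithin_pos (hs : Convex ℝ s) (hf : DifferentiableOn ℝ f s)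
    (hpos : ∀ x ∈ s, 0 < derivWithin f s x) : StrictMonoOn f s :=
  strictMonoOn_of_hasDerivWithinAt_pos hs hf.continuousOn
    (fun x hx ↦ (hf x (interior_subset hx)).hasDerivWithinAt.mono interior_subset)
    fun x hx ↦ hpos x (interior_subset hx)

theorem dist_le_mul_dist_of_one_le_mul_derivWithin (hD : Convex ℝ D) (hDs : D ⊆ s)
    (hf : DifferentiableOn ℝ f s) {M : ℝ} (hM : 0 ≤ M)
    (hderiv : ∀ x ∈ D, 1 ≤ M * derivWithin f s x) {x y : ℝ} (hx : x ∈ D) (hy : y ∈ D) :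
    dist x y ≤ M * dist (f x) (f y) := by
  have hsub : ∀ z ∈ D, HasDerivWithinAt (fun z ↦ M * f z - z) (M * derivWithin f s z - 1) D z :=
    fun z hz ↦ (((hf z (hDs hz)).hasDerivWithinAt.mono hDs).const_mul M).sub
      (hasDerivWithinAt_id z D)
  have hmono : MonotoneOn (fun z ↦ M * f z - z) D :=
    monotoneOn_of_hasDerivWithinAt_nonneg hD (fun z hz ↦ (hsub z hz).continuousWithinAt)
      (fun z hz ↦ (hsub z (interior_subset hz)).mono interior_subset)
      fun z hz ↦ sub_nonneg.2 (hderiv z (interior_subset hz))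
  wlog hxy : x ≤ y generalizing x y
  · rw [dist_comm x, dist_comm (f x)]
    exact this hy hx (le_of_not_ge hxy)
  calc dist x y = y - x := by rw [dist_comm, Real.dist_eq, abs_of_nonneg (sub_nonneg.2 hxy)]
    _ ≤ M * (f y - f x) := by linarith [hmono hx hy hxy]
    _ ≤ M * dist (f x) (f y) := by
      rw [dist_comm, Real.dist_eq]
      gcongr
      exact le_abs_self _

end RealDerivative

section Variation

theorem sum_edist_le_eVariationOn_of_antitone {α E : Type*} [LinearOrder α]
    [PseudoEMetricSpace E] (φ : α → E) {x u v : ℕ → α} (hx : Antitone x)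
    (hu : ∀ k, u k ∈ Icc (x (k + 1)) (x k)) (hv : ∀ k, v k ∈ Icc (x (k + 1)) (x k)) (n : ℕ) :
    ∑ k ∈ Finset.range n, edist (φ (u k)) (φ (v k)) ≤ eVariationOn φ (Icc (x n) (x 0)) := by
  induction n with
  | zero => simp
  | succ n ih =>
    have hsplit := eVariationOn.Icc_add_Icc φ (hx n.le_succ) (hx n.zero_le) (mem_univ (x n))
    simp only [univ_inter] at hsplit
    rw [Finset.sum_range_succ, add_comm, ← hsplit]
    exact add_le_add (eVariationOn.edist_le φ (hu n) (hv n)) ih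

theorem sum_sub_le_toReal_eVariationOn_of_antitone {α : Type*} [LinearOrder α] {φ : α → ℝ}
    {s : Set α} (hφ : BoundedVariationOn φ s) {x u v : ℕ → α} (hx : Antitone x)
    (hs : ∀ k, Icc (x k) (x 0) ⊆ s) (hu : ∀ k, u k ∈ Icc (x (k + 1)) (x k))
    (hv : ∀ k, v k ∈ Icc (x (k + 1)) (x k)) (n : ℕ) :
    ∑ k ∈ Finset.range n, (φ (u k) - φ (v k)) ≤ (eVariationOn φ s).toReal := by
  rw [← ENNReal.ofReal_le_iff_le_toReal hφ]
  calc ENNReal.ofReal (∑ k ∈ Finset.range n, (φ (u k) - φ (v k)))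
    _ ≤ ENNReal.ofReal (∑ k ∈ Finset.range n, dist (φ (u k)) (φ (v k))) :=
      ENNReal.ofReal_le_ofReal (Finset.sum_le_sum fun k _ ↦ le_abs_self _)
    _ = ∑ k ∈ Finset.range n, edist (φ (u k)) (φ (v k)) := by
      simp only [edist_dist, ENNReal.ofReal_sum_of_nonneg fun _ _ ↦ dist_nonneg]
    _ ≤ eVariationOn φ (Icc (x n) (x 0)) := sum_edist_le_eVariationOn_of_antitone φ hx hu hv n
    _ ≤ eVariationOn φ s := eVariationOn.mono φ (hs n)

theorem locallyBoundedVariationOn_of_contDiffOn {E : Type*} [NormedAddCommGroup E]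
    [NormedSpace ℝ E] {φ : ℝ → E} {s : Set ℝ} [hs : s.OrdConnected] (hφ : ContDiffOn ℝ 1 φ s) :
    LocallyBoundedVariationOn φ s := by
  intro c d hc hd
  rw [inter_eq_right.2 (hs.out hc hd)]
  obtain ⟨K, hK⟩ := (hφ.mono (hs.out hc hd)).exists_lipschitzOnWith one_ne_zero (convex_Icc c d)
    isCompact_Icc
  rcases le_or_gt c d with hcd | hcd
  · simpa using hK.locallyBoundedVariationOn c d (left_mem_Icc.2 hcd) (right_mem_Icc.2 hcd)
  · exact .of_subsingleton (by simp [Icc_eq_empty_of_lt hcd])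

theorem locallyBoundedVariationOn_comp_of_monotoneOn {α β E : Type*} [LinearOrder α]
    [LinearOrder β] [PseudoEMetricSpace E] {φ : α → E} {s : Set α} {t : Set β} {h : β → α}
    (hφ : LocallyBoundedVariationOn φ s) (hh : MonotoneOn h t) (hmaps : MapsTo h t s) :
    LocallyBoundedVariationOn (φ ∘ h) t := fun _ _ hc hd ↦
  ne_top_of_le_ne_top (hφ _ _ (hmaps hc) (hmaps hd)) <|
    eVariationOn.comp_le_of_monotoneOn φ h (hh.mono inter_subset_left) fun _ hx ↦
      ⟨hmaps hx.1, hh hc hx.1 hx.2.1, hh hx.1 hd hx.2.2⟩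

end Variation

/-- Orientation-preserving embeddings of class `C^{1 + bv}` of `[a, b)` into itself that fix `a`.
Continuity of the derivative is not listed as a field: by Darboux's theorem it follows from the
bounded variation of its logarithm. -/
structure IsBVEmbedding (a b : ℝ) (f : ℝ → ℝ) : Prop where
  mapsTo : MapsTo f (Ico a b) (Ico a b)
  map_left : f a = a
  differentiableOn : DifferentiableOn ℝ f (Ico a b)
  derivWithin_pos : ∀ x ∈ Ico a b, 0 < derivWithin f (Ico a b) x
  locallyBoundedVariationOn_log :
    LocallyBoundedVariationOn (fun x ↦ Real.log (derivWithin f (Ico a b) x)) (Ico a b)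

theorem isBVEmbedding_of_contDiffOn_two {a b : ℝ} (hab : a < b) {f : ℝ → ℝ}
    (hbij : BijOn f (Ico a b) (Ico a b)) (hf : ContDiffOn ℝ 2 f (Ico a b))
    (hpos : ∀ x ∈ Ico a b, 0 < derivWithin f (Ico a b) x) : IsBVEmbedding a b f where
  mapsTo := hbij.mapsTo
  map_left :=
    have hmono := strictMonoOn_of_derivWithin_pos (convex_Ico a b)
      (hf.differentiableOn two_ne_zero) hpos
    apply_eq_of_isLeast_of_monotoneOn (isLeast_Ico hab) hmono.monotoneOn hbij.mapsTo hbij.surjOn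
  differentiableOn := hf.differentiableOn two_ne_zero
  derivWithin_pos := hpos
  locallyBoundedVariationOn_log :=
    locallyBoundedVariationOn_of_contDiffOn <|
      (hf.derivWithin (uniqueDiffOn_Ico a b) one_add_one_eq_two.le).log fun x hx ↦ (hpos x hx).ne'

namespace IsBVEmbedding

variable {a b p : ℝ} {f g : ℝ → ℝ}

theorem strictMonoOn (hf : IsBVEmbedding a b f) : StrictMonoOn f (Ico a b) :=
  strictMonoOn_of_derivWithin_pos (convex_Ico a b) hf.differentiableOn hf.derivWithin_pos

theorem mapsTo_Ioo (hf : IsBVEmbedding a b f) : MapsTo f (Ioo a b) (Ioo a b) := fun x hx ↦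
  ⟨by simpa only [hf.map_left] using
    hf.strictMonoOn (left_mem_Ico.2 (hx.1.trans hx.2)) (Ioo_subset_Ico_self hx) hx.1,
    (hf.mapsTo (Ioo_subset_Ico_self hx)).2⟩

theorem Icc_apply_subset (hf : IsBVEmbedding a b f) (hp : p ∈ Ico a b) :
    Icc (f p) p ⊆ Ico a b := fun _ hx ↦ ⟨(hf.mapsTo hp).1.trans hx.1, hx.2.trans_lt hp.2⟩

theorem iterate_mem_Icc (hf : IsBVEmbedding a b f) (hp : p ∈ Ico a b) {x : ℝ}
    (hx : x ∈ Icc (f p) p) (n : ℕ) : f^[n] x ∈ Icc (f^[n + 1] p) (f^[n] p) :=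
  have hmono := monotoneOn_iterate hf.strictMonoOn.monotoneOn hf.mapsTo n
  have hxS := hf.Icc_apply_subset hp hx
  ⟨hmono (hf.mapsTo hp) hxS hx.1, hmono hxS hp hx.2⟩

theorem derivWithin_iterate_eq_exp_sum_log (hf : IsBVEmbedding a b f) (n : ℕ) {x : ℝ}
    (hx : x ∈ Ico a b) : derivWithin f^[n] (Ico a b) x =
      Real.exp (∑ k ∈ Finset.range n, Real.log (derivWithin f (Ico a b) (f^[k] x))) := by
  rw [(hasDerivWithinAt_iterate (fun y hy ↦ (hf.differentiableOn y hy).hasDerivWithinAt)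
    hf.mapsTo n hx).derivWithin (uniqueDiffOn_Ico a b x hx), Real.exp_sum]
  exact Finset.prod_congr rfl fun k _ ↦
    (Real.exp_log (hf.derivWithin_pos _ (hf.mapsTo.iterate k hx))).symm

theorem derivWithin_iterate_pos (hf : IsBVEmbedding a b f) (n : ℕ) {x : ℝ} (hx : x ∈ Ico a b) :
    0 < derivWithin f^[n] (Ico a b) x :=
  (Real.exp_pos _).trans_eq (hf.derivWithin_iterate_eq_exp_sum_log n hx).symm

section Inverse

theorem hasDerivWithinAt_invFunOn (hf : IsBVEmbedding a b f)
    (hsurj : SurjOn f (Ico a b) (Ico a b)) {x : ℝ} (hx : x ∈ Ico a b) :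
    HasDerivWithinAt (Function.invFunOn f (Ico a b))
      (derivWithin f (Ico a b) (Function.invFunOn f (Ico a b) x))⁻¹ (Ico a b) x := by
  have hmaps := hsurj.mapsTo_invFunOn
  have hcont : ContinuousOn (Function.invFunOn f (Ico a b)) (Ico a b) :=
    continuousOn_of_monotoneOn_of_surjOn (strictMonoOn_invFunOn hf.strictMonoOn hsurj).monotoneOn
      hmaps (hf.strictMonoOn.injOn.leftInvOn_invFunOn.surjOn hf.mapsTo)
  exact hasDerivWithinAt_of_local_left_inverse ((hcont x hx).tendsto_nhdsWithin hmaps)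
    (hf.differentiableOn _ (hmaps hx)).hasDerivWithinAt (hf.derivWithin_pos _ (hmaps hx)).ne' hx
    (eventually_mem_nhdsWithin.mono fun _ hy ↦ hsurj.rightInvOn_invFunOn hy)

theorem invFunOn (hf : IsBVEmbedding a b f) (hab : a < b)
    (hsurj : SurjOn f (Ico a b) (Ico a b)) :
    IsBVEmbedding a b (Function.invFunOn f (Ico a b)) := by
  have hmaps := hsurj.mapsTo_invFunOn
  have hderiv : ∀ x ∈ Ico a b, derivWithin (Function.invFunOn f (Ico a b)) (Ico a b) x =
      (derivWithin f (Ico a b) (Function.invFunOn f (Ico a b) x))⁻¹ := fun x hx ↦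
    (hf.hasDerivWithinAt_invFunOn hsurj hx).derivWithin (uniqueDiffOn_Ico a b x hx)
  refine ⟨hmaps, ?_, fun x hx ↦ (hf.hasDerivWithinAt_invFunOn hsurj hx).differentiableWithinAt,
    fun x hx ↦ ?_, ?_⟩
  · simpa only [hf.map_left] using
      hf.strictMonoOn.injOn.leftInvOn_invFunOn (left_mem_Ico.2 hab)
  · rw [hderiv x hx]
    exact inv_pos.2 (hf.derivWithin_pos _ (hmaps hx))
  · have hcomp := locallyBoundedVariationOn_comp_of_monotoneOn hf.locallyBoundedVariationOn_log
      (strictMonoOn_invFunOn hf.strictMonoOn hsurj).monotoneOn hmaps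
    have hneg := LipschitzWith.id.neg.comp_locallyBoundedVariationOn hcomp
    intro c d hc hd
    rw [BoundedVariationOn, eVariationOn.congr fun x hx ↦ ?_]
    · exact hneg c d hc hd
    · simp [hderiv x hx.1, Real.log_inv]

theorem surjOn_of_lt_apply (hf : IsBVEmbedding a b f) (hgt : ∀ x ∈ Ioo a b, x < f x) :
    SurjOn f (Ico a b) (Ico a b) := by
  intro y hy
  have hyf : y ≤ f y := by
    rcases hy.1.eq_or_lt with rfl | hay
    · exact hf.map_left.ge
    · exact (hgt y ⟨hay, hy.2⟩).le
  have hsub : Icc a y ⊆ Ico a b := Icc_subset_Ico_right hy.2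
  exact image_mono hsub <|
    intermediate_value_Icc hy.1 (hf.differentiableOn.continuousOn.mono hsub)
      ⟨hf.map_left.trans_le hy.1, hyf⟩

theorem invFunOn_apply_lt (hf : IsBVEmbedding a b f) (hgt : ∀ x ∈ Ioo a b, x < f x) :
    ∀ x ∈ Ioo a b, Function.invFunOn f (Ico a b) x < x := by
  intro x hx
  have hsurj := hf.surjOn_of_lt_apply hgt
  have hlt := hgt _ ((hf.invFunOn (hx.1.trans hx.2) hsurj).mapsTo_Ioo hx)
  rwa [hsurj.rightInvOn_invFunOn (Ioo_subset_Ico_self hx)] at hlt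

end Inverse

section Contraction

variable (hf : IsBVEmbedding a b f) (hlt : ∀ x ∈ Ioo a b, f x < x)
include hf hlt

theorem apply_le {x : ℝ} (hx : x ∈ Ico a b) : f x ≤ x := by
  rcases hx.1.eq_or_lt with rfl | hax
  · exact hf.map_left.le
  · exact (hlt x ⟨hax, hx.2⟩).le

theorem antitone_iterate {x : ℝ} (hx : x ∈ Ico a b) : Antitone fun n ↦ f^[n] x :=
  antitone_nat_of_succ_le fun n ↦ by
    rw [Function.iterate_succ_apply']
    exact hf.apply_le hlt (hf.mapsTo.iterate n hx)

theorem tendsto_iterate {x : ℝ} (hx : x ∈ Ico a b) :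
    Tendsto (fun n ↦ f^[n] x) atTop (𝓝[Ico a b] a) := by
  have hmem (n : ℕ) : f^[n] x ∈ Ico a b := hf.mapsTo.iterate n hx
  have hlim := tendsto_atTop_ciInf (hf.antitone_iterate hlt hx)
    ⟨a, forall_mem_range.2 fun n ↦ (hmem n).1⟩
  set l := ⨅ n, f^[n] x
  have hl : l ∈ Ico a b := ⟨ge_of_tendsto' hlim fun n ↦ (hmem n).1,
    (le_of_tendsto' hlim fun n ↦ hf.antitone_iterate hlt hx n.zero_le).trans_lt hx.2⟩
  have hwithin : Tendsto (fun n ↦ f^[n] x) atTop (𝓝[Ico a b] l) :=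
    tendsto_nhdsWithin_iff.2 ⟨hlim, .of_forall hmem⟩
  have hfixed : f l = l := by
    refine tendsto_nhds_unique ((hf.differentiableOn.continuousOn l hl).tendsto.comp hwithin) ?_
    simpa only [Function.comp_def, Function.iterate_succ_apply'] using
      hlim.comp (tendsto_add_atTop_nat 1)
  have hla : l = a := (hl.1.eq_or_lt.resolve_right fun hal ↦ (hlt l ⟨hal, hl.2⟩).ne hfixed).symm
  rwa [hla] at hwithin

theorem exists_derivWithin_iterate_le_mul (hp : p ∈ Ico a b) :
    ∃ M > 0, ∀ n, ∀ u ∈ Icc (f p) p, ∀ v ∈ Icc (f p) p,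
      derivWithin f^[n] (Ico a b) u ≤ M * derivWithin f^[n] (Ico a b) v := by
  set φ := fun x ↦ Real.log (derivWithin f (Ico a b) x)
  have hbdd : BoundedVariationOn φ (Ico a b ∩ Icc a p) :=
    hf.locallyBoundedVariationOn_log a p (left_mem_Ico.2 (hp.1.trans_lt hp.2)) hp
  have hsub (n : ℕ) : Icc (f^[n] p) p ⊆ Ico a b ∩ Icc a p := fun x hx ↦
    have hax : a ≤ x := (hf.mapsTo.iterate n hp).1.trans hx.1
    ⟨⟨hax, hx.2.trans_lt hp.2⟩, hax, hx.2⟩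
  refine ⟨Real.exp (eVariationOn φ (Ico a b ∩ Icc a p)).toReal, Real.exp_pos _,
    fun n u hu v hv ↦ ?_⟩
  have hsum := sum_sub_le_toReal_eVariationOn_of_antitone hbdd (hf.antitone_iterate hlt hp) hsub
    (hf.iterate_mem_Icc hp hu) (hf.iterate_mem_Icc hp hv) n
  rw [hf.derivWithin_iterate_eq_exp_sum_log n (hf.Icc_apply_subset hp hu),
    hf.derivWithin_iterate_eq_exp_sum_log n (hf.Icc_apply_subset hp hv), ← Real.exp_add,
    Real.exp_le_exp]
  rwa [Finset.sum_sub_distrib, sub_le_iff_le_add] at hsum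

end Contraction

section Commuting

variable (hf : IsBVEmbedding a b f) (hlt : ∀ x ∈ Ioo a b, f x < x)
  (hgmaps : MapsTo g (Ico a b) (Ico a b)) (hg : ContDiffOn ℝ 1 g (Ico a b))
  (hcomm : EqOn (f ∘ g) (g ∘ f) (Ico a b)) (hp : p ∈ Ioo a b) (hgp : g p = p)

include hf hcomm in
theorem eqOn_iterate_comp (n : ℕ) : EqOn (f^[n] ∘ g) (g ∘ f^[n]) (Ico a b) :=
  (eqOn_comp_iterate hf.mapsTo hcomm.symm n).symm

include hf hcomm hp hgp in
theorem apply_iterate_eq (n : ℕ) : g (f^[n] p) = f^[n] p := by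
  simpa only [Function.comp_apply, hgp] using
    (hf.eqOn_iterate_comp hcomm n (Ioo_subset_Ico_self hp)).symm

include hf hlt hg hcomm hp hgp in
theorem tendsto_derivWithin_comp_iterate {x : ℝ} (hx : x ∈ Ico a b) :
    Tendsto (fun n ↦ derivWithin g (Ico a b) (f^[n] x)) atTop (𝓝 1) := by
  have ha : a ∈ Ico a b := left_mem_Ico.2 (hp.1.trans hp.2)
  have hpunctured : Tendsto (fun n ↦ f^[n] p) atTop (𝓝[Ico a b \ {a}] a) :=
    tendsto_nhdsWithin_iff.2
      ⟨(hf.tendsto_iterate hlt (Ioo_subset_Ico_self hp)).mono_right nhdsWithin_le_nhds,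
        .of_forall fun n ↦ have hn := hf.mapsTo_Ioo.iterate n hp
          ⟨Ioo_subset_Ico_self hn, hn.1.ne'⟩⟩
  have hone : derivWithin g (Ico a b) a = 1 :=
    derivWithin_eq_one_of_frequently_fixed (hg.differentiableOn one_ne_zero a ha) <|
      hpunctured.frequently (.of_forall (hf.apply_iterate_eq hcomm hp hgp))
  rw [← hone]
  exact ((hg.continuousOn_derivWithin (uniqueDiffOn_Ico a b) le_rfl) a ha).tendsto.comp
    (hf.tendsto_iterate hlt hx)

include hf hgmaps hg hcomm in
theorem derivWithin_iterate_apply_mul_derivWithin (n : ℕ) {x : ℝ} (hx : x ∈ Ico a b) :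
    derivWithin f^[n] (Ico a b) (g x) * derivWithin g (Ico a b) x =
      derivWithin g (Ico a b) (f^[n] x) * derivWithin f^[n] (Ico a b) x :=
  derivWithin_mul_derivWithin_of_eqOn_comp (hf.differentiableOn.iterate hf.mapsTo n)
    (hg.differentiableOn one_ne_zero) (hf.mapsTo.iterate n) hgmaps
    (hf.eqOn_iterate_comp hcomm n) hx

include hf hlt hgmaps hg hcomm hp hgp in
theorem strictMonoOn_of_commute : StrictMonoOn g (Ico a b) := by
  refine strictMonoOn_of_derivWithin_pos (convex_Ico a b) (hg.differentiableOn one_ne_zero)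
    fun x hx ↦ ?_
  obtain ⟨n, hn⟩ := ((hf.tendsto_derivWithin_comp_iterate hlt hg hcomm hp hgp hx).eventually
    (lt_mem_nhds one_pos)).exists
  refine pos_of_mul_pos_right ?_ (hf.derivWithin_iterate_pos n (hgmaps hx)).le
  rw [hf.derivWithin_iterate_apply_mul_derivWithin hgmaps hg hcomm n hx]
  exact mul_pos hn (hf.derivWithin_iterate_pos n hx)

include hf hlt hgmaps hg hcomm hp hgp in
theorem mapsTo_Icc_of_commute : MapsTo g (Icc (f p) p) (Icc (f p) p) := by
  have hmono := (hf.strictMonoOn_of_commute hlt hgmaps hg hcomm hp hgp).monotoneOn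
  have hgfp : g (f p) = f p := hf.apply_iterate_eq hcomm hp hgp 1
  simpa only [hgp, hgfp] using
    (hmono.mono (hf.Icc_apply_subset (Ioo_subset_Ico_self hp))).mapsTo_Icc

include hf hlt hgmaps hg hcomm hp hgp in
theorem one_le_mul_derivWithin_of_commute {M : ℝ}
    (hM : ∀ n, ∀ u ∈ Icc (f p) p, ∀ v ∈ Icc (f p) p,
      derivWithin f^[n] (Ico a b) u ≤ M * derivWithin f^[n] (Ico a b) v)
    {u : ℝ} (hu : u ∈ Icc (f p) p) : 1 ≤ M * derivWithin g (Ico a b) u := by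
  have hsub := hf.Icc_apply_subset (Ioo_subset_Ico_self hp)
  have hmono := hf.strictMonoOn_of_commute hlt hgmaps hg hcomm hp hgp
  have hgu := hf.mapsTo_Icc_of_commute hlt hgmaps hg hcomm hp hgp hu
  have hnonneg : 0 ≤ derivWithin g (Ico a b) u := hmono.monotoneOn.derivWithin_nonneg
  refine le_of_tendsto' (hf.tendsto_derivWithin_comp_iterate hlt hg hcomm hp hgp (hsub hu))
    fun n ↦ ?_
  refine le_of_mul_le_mul_right ?_ (hf.derivWithin_iterate_pos n (hsub hu))
  calc derivWithin g (Ico a b) (f^[n] u) * derivWithin f^[n] (Ico a b) u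
    _ = derivWithin f^[n] (Ico a b) (g u) * derivWithin g (Ico a b) u :=
      (hf.derivWithin_iterate_apply_mul_derivWithin hgmaps hg hcomm n (hsub hu)).symm
    _ ≤ M * derivWithin f^[n] (Ico a b) u * derivWithin g (Ico a b) u := by
      gcongr
      exact hM n _ hgu _ hu
    _ = M * derivWithin g (Ico a b) u * derivWithin f^[n] (Ico a b) u := mul_right_comm ..

include hf hlt hgmaps hg hcomm hp hgp in
theorem eqOn_id_Icc_of_commute : EqOn g id (Icc (f p) p) := by
  have hpS := Ioo_subset_Ico_self hp
  obtain ⟨M, hM0, hM⟩ := hf.exists_derivWithin_iterate_le_mul hlt hpS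
  have hsub := hf.Icc_apply_subset hpS
  have hmono := hf.strictMonoOn_of_commute hlt hgmaps hg hcomm hp hgp
  refine eqOn_id_of_dist_le_mul_dist_iterate (M := M) (hmono.monotoneOn.mono hsub)
    (hf.mapsTo_Icc_of_commute hlt hgmaps hg hcomm hp hgp) bddBelow_Icc bddAbove_Icc
    fun k x hx y hy ↦ ?_
  have hgk := contDiffOn_iterate hg hgmaps k
  exact dist_le_mul_dist_of_one_le_mul_derivWithin (convex_Icc _ _) hsub
    (hgk.differentiableOn one_ne_zero) hM0.le
    (fun u hu ↦ hf.one_le_mul_derivWithin_of_commute hlt (hgmaps.iterate k) hgk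
      (eqOn_comp_iterate hgmaps hcomm k) hp (Function.iterate_fixed hgp k) hM hu) hx hy

include hf hlt hgmaps hg hcomm hp hgp in
theorem eqOn_id_Ioc_of_commute : EqOn g id (Ioc a p) := by
  intro x hx
  have hlim := (hf.tendsto_iterate hlt (Ioo_subset_Ico_self hp)).mono_right nhdsWithin_le_nhds
  obtain ⟨n, hn⟩ := exists_mem_Icc_of_lt (u := fun n ↦ f^[n] p) hx.2
    (hlim.eventually (gt_mem_nhds hx.1)).exists
  simp only [Function.iterate_succ_apply'] at hn
  exact hf.eqOn_id_Icc_of_commute hlt hgmaps hg hcomm (hf.mapsTo_Ioo.iterate n hp)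
    (hf.apply_iterate_eq hcomm hp hgp n) hn

include hf hlt hgmaps hg hcomm hp hgp in
theorem eqOn_id_of_commute : EqOn g id (Ico a b) := by
  have hIoo : EqOn g id (Ioo a b) := fun x hx ↦ by
    have hxS := Ioo_subset_Ico_self hx
    have hlim := (hf.tendsto_iterate hlt hxS).mono_right nhdsWithin_le_nhds
    obtain ⟨n, hn⟩ := (hlim.eventually (gt_mem_nhds hp.1)).exists
    refine hf.strictMonoOn.injOn.iterate hf.mapsTo n (hgmaps hxS) hxS ?_
    exact (hf.eqOn_iterate_comp hcomm n hxS).trans <|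
      hf.eqOn_id_Ioc_of_commute hlt hgmaps hg hcomm hp hgp
        ⟨(hf.mapsTo_Ioo.iterate n hx).1, hn.le⟩
  refine hIoo.of_subset_closure hg.continuousOn continuousOn_id Ioo_subset_Ico_self ?_
  rw [closure_Ioo (hp.1.trans hp.2).ne]
  exact Ico_subset_Icc_self

end Commuting

end IsBVEmbedding

end Kopell

theorem kopell_lemma_general {a b : ℝ} {f g : ℝ → ℝ} (hf : Kopell.IsBVEmbedding a b f)
    (hgmaps : MapsTo g (Ico a b) (Ico a b)) (hg : ContDiffOn ℝ 1 g (Ico a b))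
    (hcomm : EqOn (f ∘ g) (g ∘ f) (Ico a b)) (hfnofix : ∀ x ∈ Ioo a b, f x ≠ x)
    (hgfix : ∃ x ∈ Ioo a b, g x = x) : EqOn g id (Ico a b) := by
  obtain ⟨p, hp, hgp⟩ := hgfix
  have hcont := hf.differentiableOn.continuousOn.mono Ioo_subset_Ico_self
  rcases Kopell.forall_lt_or_forall_gt_of_forall_ne isPreconnected_Ioo hcont continuousOn_id
    hfnofix with hlt | hgt
  · exact hf.eqOn_id_of_commute hlt hgmaps hg hcomm hp hgp
  · have hsurj := hf.surjOn_of_lt_apply hgt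
    exact (hf.invFunOn (hp.1.trans hp.2) hsurj).eqOn_id_of_commute (hf.invFunOn_apply_lt hgt)
      hgmaps hg (Kopell.eqOn_invFunOn_comp hf.strictMonoOn.injOn hsurj hgmaps hcomm) hp hgp

/-- **Kopell's Lemma.** If `f` and `g` are commuting orientation-preserving C²
diffeomorphisms of the half-open interval `[a, b)`, `f` has no fixed point in `(a, b)`,
and `g` has a fixed point in `(a, b)`, then `g` is the identity on `[a, b)`. -/
theorem kopell_lemma (a b : ℝ) (hab : a < b) (f g : ℝ → ℝ)
    (hfbij : Set.BijOn f (Set.Ico a b) (Set.Ico a b))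
    (hgbij : Set.BijOn g (Set.Ico a b) (Set.Ico a b))
    (hf2 : ContDiffOn ℝ 2 f (Set.Ico a b))
    (hg2 : ContDiffOn ℝ 2 g (Set.Ico a b))
    (hf' : ∀ x ∈ Set.Ico a b, 0 < derivWithin f (Set.Ico a b) x)
    (hg' : ∀ x ∈ Set.Ico a b, 0 < derivWithin g (Set.Ico a b) x)
    (hcomm : ∀ x ∈ Set.Ico a b, f (g x) = g (f x))
    (hfnofix : ∀ x ∈ Set.Ioo a b, f x ≠ x)
    (hgfix : ∃ x ∈ Set.Ioo a b, g x = x) :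
    ∀ x ∈ Set.Ico a b, g x = x :=
  kopell_lemma_general (Kopell.isBVEmbedding_of_contDiffOn_two hab hfbij hf2 hf') hgbij.mapsTo
    (hg2.of_le one_le_two) hcomm hfnofix hgfix
end

section
/- Hölder's Theorem: Let G be a group of orientation-preserving homeomorphisms of ℝ and let X ⊆ ℝ be a nonempty closed set invariant under every element of G. Suppose the action of G on X is free and effective, i.e., any element of G that fixes some point of X is the identity element of G. Then G is abelian. -/
/-!
Being closed, `X` is a conditionally complete linear order in its own right, and only the action of
`G` on `X` matters. If `x < g • x`, the orbit `g ^ n • x` is unbounded, since its supremum would be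
fixed by `g`; hence `g` moves every point up. Ordering `G` by its action on a base point therefore
makes it an archimedean bi-ordered group, and such a group is commutative: either it has a least
element above `1`, which generates it, or every `e > 1` has some `d > 1` with `d * d ≤ e`. In the
second case, if `e = a * b * (b * a)⁻¹ > 1`, locating `a` and `b` between consecutive powers of `d`
gives `a * b < d * d * (b * a)`, that is, `e < d * d`.
-/

open Set

section ArchimedeanGroup

/-- The archimedean property of a possibly noncommutative ordered group. Mathlib's `MulArchimedean`
presupposes commutativity, which is the conclusion here. -/
def IsArchimedeanGroup (G : Type*) [Group G] [Preorder G] : Prop :=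
  ∀ (g : G) ⦃a : G⦄, 1 < a → ∃ n : ℕ, g ≤ a ^ n

variable {G : Type*} [Group G] [LinearOrder G] [MulLeftMono G] [MulRightMono G]

theorem IsArchimedeanGroup.exists_zpow_le_lt (hG : IsArchimedeanGroup G) {a : G}
    (ha : 1 < a) (g : G) : ∃ n : ℤ, a ^ n ≤ g ∧ g < a ^ (n + 1) := by
  have zpow_strictMono : StrictMono fun n : ℤ ↦ a ^ n :=
    strictMono_int_of_lt_succ fun n ↦ by
      rw [zpow_add_one]
      exact lt_mul_of_one_lt_right' _ ha
  obtain ⟨M, hM⟩ := hG g⁻¹ ha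
  obtain ⟨N, hN⟩ := hG g ha
  have lower : a ^ (-M : ℤ) ≤ g := by
    rw [zpow_neg, zpow_natCast]
    exact inv_le_of_inv_le' hM
  have upper : ∀ n : ℤ, a ^ n ≤ g → n ≤ N := fun n hn ↦
    zpow_strictMono.le_iff_le.mp (hn.trans (by simpa only [zpow_natCast] using hN))
  obtain ⟨n, hn, hn_max⟩ := Int.exists_greatest_of_bdd ⟨N, upper⟩ ⟨-M, lower⟩
  exact ⟨n, hn, lt_of_not_ge fun h ↦ (lt_add_one n).not_ge (hn_max _ h)⟩

theorem IsArchimedeanGroup.mem_zpowers_of_isLeast (hG : IsArchimedeanGroup G)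
    {c : G} (hc : IsLeast (Ioi 1) c) (g : G) : g ∈ Subgroup.zpowers c := by
  obtain ⟨n, hle, hlt⟩ := hG.exists_zpow_le_lt hc.1 g
  refine ⟨n, hle.antisymm (le_of_not_gt fun h ↦ hlt.not_ge ?_)⟩
  have : c ≤ (c ^ n)⁻¹ * g := hc.2 (by simpa only [mem_Ioi, lt_inv_mul_iff_mul_lt, mul_one] using h)
  rwa [le_inv_mul_iff_mul_le, ← zpow_add_one] at this

theorem exists_one_lt_mul_self_le (hG : ¬∃ c : G, IsLeast (Ioi 1) c) {e : G}
    (he : 1 < e) : ∃ d : G, 1 < d ∧ d * d ≤ e := by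
  obtain ⟨f, hf, hfe⟩ : ∃ f : G, 1 < f ∧ f < e := by
    by_contra! h
    exact hG ⟨e, he, h⟩
  rcases le_or_gt (f * f) e with hff | hff
  · exact ⟨f, hf, hff⟩
  · refine ⟨e * f⁻¹, by simpa using hfe, ?_⟩
    have : f⁻¹ * (e * f⁻¹) ≤ 1 := by simpa using hff.le
    calc e * f⁻¹ * (e * f⁻¹) = e * (f⁻¹ * (e * f⁻¹)) := by group
      _ ≤ e := mul_le_of_le_one_right' this

theorem IsArchimedeanGroup.mul_lt_mul_self_mul (hG : IsArchimedeanGroup G) {d : G}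
    (hd : 1 < d) (a b : G) : a * b < d * d * (b * a) := by
  obtain ⟨m, hma, ham⟩ := hG.exists_zpow_le_lt hd a
  obtain ⟨n, hnb, hbn⟩ := hG.exists_zpow_le_lt hd b
  calc a * b < d ^ (m + 1) * d ^ (n + 1) := mul_lt_mul_of_lt_of_lt ham hbn
    _ = d * d * (d ^ n * d ^ m) := by group
    _ ≤ d * d * (b * a) := by gcongr

theorem IsArchimedeanGroup.commute (hG : IsArchimedeanGroup G) (a b : G) :
    Commute a b := by
  by_cases hmin : ∃ c : G, IsLeast (Ioi 1) c
  · obtain ⟨c, hc⟩ := hmin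
    obtain ⟨m, rfl⟩ := hG.mem_zpowers_of_isLeast hc a
    obtain ⟨n, rfl⟩ := hG.mem_zpowers_of_isLeast hc b
    exact Commute.zpow_zpow_self c m n
  · have mul_le_swap (a b : G) : a * b ≤ b * a := by
      by_contra! hlt
      obtain ⟨d, hd, hde⟩ := exists_one_lt_mul_self_le hmin (e := a * b * (b * a)⁻¹)
        (by rwa [lt_mul_inv_iff_mul_lt, one_mul])
      exact (hG.mul_lt_mul_self_mul hd a b).not_ge (le_mul_inv_iff_mul_le.mp hde)
    exact (mul_le_swap a b).antisymm (mul_le_swap b a)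

end ArchimedeanGroup

section OrderPreservingAction

variable {G α : Type*} [Group G] [MulAction G α]

theorem smul_strictMono_of_group [PartialOrder α] [CovariantClass G α HSMul.hSMul LE.le] (g : G) :
    StrictMono (g • · : α → α) :=
  (smul_mono_right g).strictMono_of_injective (MulAction.injective g)

theorem smul_iSup_pow_smul [ConditionallyCompleteLattice α] [CovariantClass G α HSMul.hSMul LE.le]
    {g : G} {x : α} (hx : x ≤ g • x) (hbdd : BddAbove (range fun n : ℕ ↦ g ^ n • x)) :
    g • ⨆ n : ℕ, g ^ n • x = ⨆ n : ℕ, g ^ n • x := by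
  set s := ⨆ n : ℕ, g ^ n • x
  have pow_smul_le_sup (n : ℕ) : g ^ n • x ≤ s := le_ciSup hbdd n
  apply le_antisymm
  · have : s ≤ g⁻¹ • s := ciSup_le fun n ↦ by
      simpa [pow_succ', mul_smul] using smul_mono_right g⁻¹ (pow_smul_le_sup (n + 1))
    simpa using smul_mono_right g this
  · refine ciSup_le fun n ↦ ?_
    calc g ^ n • x ≤ g ^ n • g • x := smul_mono_right _ hx
      _ = g • g ^ n • x := by rw [← mul_smul, ← mul_smul, pow_mul_comm']
      _ ≤ g • s := smul_mono_right g (pow_smul_le_sup n)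

variable [ConditionallyCompleteLinearOrder α] [CovariantClass G α HSMul.hSMul LE.le]
  [IsCancelSMul G α] {g : G} {x : α}

theorem exists_lt_pow_smul (hx : x < g • x) (y : α) : ∃ n : ℕ, y < g ^ n • x := by
  by_contra! h
  have hfix := smul_iSup_pow_smul hx.le ⟨y, forall_mem_range.mpr h⟩
  obtain rfl : g = 1 := IsCancelSMul.eq_one_of_smul hfix
  simp at hx

theorem lt_smul_of_le_of_lt_smul {y : α} (hxy : x ≤ y) (hx : x < g • x) : y < g • y := by
  by_contra! hy
  obtain ⟨n, hn⟩ := exists_lt_pow_smul hx y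
  exact hn.not_ge ((smul_mono_right _ hxy).trans (pow_smul_le hy n))

theorem lt_smul_of_lt_smul (hx : x < g • x) (y : α) : y < g • y := by
  rcases le_total x y with hxy | hyx
  · exact lt_smul_of_le_of_lt_smul hxy hx
  · by_contra! hy
    have hne : g • y ≠ y := fun h ↦ by
      obtain rfl : g = 1 := IsCancelSMul.eq_one_of_smul h
      simp at hx
    have hy' : y < g⁻¹ • y := by
      simpa using smul_strictMono_of_group g⁻¹ (hy.lt_of_ne hne)
    have hx' : g • x < x := by
      simpa using smul_strictMono_of_group g (lt_smul_of_le_of_lt_smul hyx hy')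
    exact hx.asymm hx'

theorem smul_le_smul_of_smul_le_smul {h : G} (hgh : g • x ≤ h • x) (y : α) : g • y ≤ h • y := by
  rcases hgh.eq_or_lt with heq | hlt
  · rw [IsCancelSMul.right_cancel g h x heq]
  · have hx : x < (g⁻¹ * h) • x := by
      simpa [mul_smul] using smul_strictMono_of_group g⁻¹ hlt
    simpa [mul_smul] using smul_mono_right g (lt_smul_of_lt_smul hx y).le

/-- The linear order on a group acting freely on a linear order for which `g ≤ h` means
`g • x ≤ h • x`, where `x` is a chosen base point. -/
abbrev orbitLinearOrder (G : Type*) {α : Type*} [Group G] [MulAction G α] [LinearOrder α]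
    [IsCancelSMul G α] (x : α) : LinearOrder G :=
  LinearOrder.lift' (· • x) fun g h ↦ IsCancelSMul.right_cancel g h x

theorem commute_of_isCancelSMul [Nonempty α] (g h : G) : Commute g h := by
  obtain ⟨x⟩ := ‹Nonempty α›
  let := orbitLinearOrder G x
  have : MulLeftMono G := ⟨fun k g h (hgh : g • x ≤ h • x) ↦
    show (k * g) • x ≤ (k * h) • x by
      simpa only [mul_smul] using smul_mono_right k hgh⟩
  have : MulRightMono G := ⟨fun k g h (hgh : g • x ≤ h • x) ↦
    show (g * k) • x ≤ (h * k) • x by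
      simpa only [mul_smul] using smul_le_smul_of_smul_le_smul hgh (k • x)⟩
  have : IsArchimedeanGroup G := fun g a (ha : (1 : G) • x < a • x) ↦
    (exists_lt_pow_smul (by rwa [one_smul] at ha) (g • x)).imp fun _ ↦ le_of_lt
  exact this.commute g h

end OrderPreservingAction

/-- A closed subset of a conditionally complete linear order is itself one: suprema and infima
of bounded nonempty subsets do not leave it. -/
noncomputable abbrev closedSubsetConditionallyCompleteLinearOrder {α : Type*}
    [ConditionallyCompleteLinearOrder α] [TopologicalSpace α] [OrderTopology α] {X : Set α}
    [Inhabited X] (hX : IsClosed X) : ConditionallyCompleteLinearOrder X :=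
  subsetConditionallyCompleteLinearOrder X
    (fun hne hbdd ↦ hX.closure_subset_iff.mpr (Subtype.coe_image_subset X _)
      (csSup_mem_closure (hne.image _) ((Subtype.mono_coe (· ∈ X)).map_bddAbove hbdd)))
    (fun hne hbdd ↦ hX.closure_subset_iff.mpr (Subtype.coe_image_subset X _)
      (csInf_mem_closure (hne.image _) ((Subtype.mono_coe (· ∈ X)).map_bddBelow hbdd)))

theorem holder_theorem_general {G α : Type*} [Group G] [MulAction G α]
    [ConditionallyCompleteLinearOrder α] [TopologicalSpace α] [OrderTopology α] {X : Set α}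
    (hX : IsClosed X) (hne : X.Nonempty) (hmaps : ∀ g : G, MapsTo (g • ·) X X)
    (hmono : ∀ g : G, MonotoneOn (g • ·) X) (hfree : ∀ g : G, ∀ x ∈ X, g • x = x → g = 1)
    (g h : G) : Commute g h := by
  let Y : SubMulAction G α := ⟨X, fun g _ hx ↦ hmaps g hx⟩
  have : Nonempty Y := hne.to_subtype
  let : Inhabited X := ⟨⟨hne.some, hne.some_mem⟩⟩
  let : ConditionallyCompleteLinearOrder Y := closedSubsetConditionallyCompleteLinearOrder hX
  have : CovariantClass G Y HSMul.hSMul LE.le := ⟨fun g x y hxy ↦ hmono g x.2 y.2 hxy⟩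
  have : IsCancelSMul G Y := isCancelSMul_iff_eq_one_of_smul_eq.mpr fun g x hx ↦
    hfree g x x.2 (congrArg Subtype.val hx)
  exact commute_of_isCancelSMul (α := Y) g h

/-- **Hölder's Theorem.** A group `G` of orientation-preserving homeomorphisms of `ℝ`
(modelled as strictly increasing bijections of `ℝ`; such maps are automatically
homeomorphisms) acting freely and effectively on a nonempty closed invariant set
`X ⊆ ℝ` is abelian. -/
theorem holder_theorem (G : Subgroup (Equiv.Perm ℝ))
    (hmono : ∀ g ∈ G, StrictMono (g : ℝ → ℝ))
    (X : Set ℝ) (hXne : X.Nonempty) (hXcl : IsClosed X)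
    (hXinv : ∀ g ∈ G, (g : ℝ → ℝ) '' X = X)
    (hfree : ∀ g ∈ G, (∃ x ∈ X, g x = x) → g = 1) :
    ∀ g ∈ G, ∀ h ∈ G, g * h = h * g := fun g hg h hh ↦
  congrArg Subtype.val (holder_theorem_general hXcl hXne
    (fun g : G ↦ mapsTo_iff_image_subset.mpr (hXinv g g.2).subset)
    (fun g ↦ (hmono g g.2).monotone.monotoneOn X)
    (fun g x hx hgx ↦ Subtype.ext (hfree g g.2 ⟨x, hx, hgx⟩)) ⟨g, hg⟩ ⟨h, hh⟩).eq
end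

section
/- Let μ be a Borel measure on ℝ that is finite on compact sets, invariant under the translation T(x) = x + 1, and satisfies μ([x, x+1)) = 1 for all x ∈ ℝ (i.e., μ is the lift of a Borel probability measure on S¹ = ℝ/ℤ). Let F be an orientation-preserving homeomorphism of ℝ commuting with T and preserving μ. For x ∈ ℝ define the mean translation number τ_μ(F) = μ([x, F(x))) if F(x) > x, τ_μ(F) = 0 if F(x) = x, and τ_μ(F) = −μ([F(x), x)) if F(x) < x. Then τ_μ(F) is independent of the point x used to define it, and τ_μ(F) equals the translation number τ(F) = lim_{n→∞} (Fⁿ(x) − x)/n. Moreover, if G is another orientation-preserving homeomorphism of ℝ commuting with T and preserving μ, then τ_μ(F ∘ G) = τ_μ(F) + τ_μ(G). -/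
open MeasureTheory Filter

/-- The mean translation number `τ_μ(F)` of `F` computed at the point `x`:
`μ([x, F x))` if `F x > x`, `0` if `F x = x`, and `−μ([F x, x))` if `F x < x`. -/
noncomputable def meanTranslationNumber (μ : Measure ℝ) (F : ℝ → ℝ) (x : ℝ) : ℝ :=
  if x < F x then (μ (Set.Ico x (F x))).toReal
  else if F x = x then 0
  else -(μ (Set.Ico (F x) x)).toReal

/-!
The distribution function `h x = μ [0, x)` (with sign) satisfies `h (x + 1) = h x + 1`, hence stays
at bounded distance from the identity. Since `F` preserves `μ`, the signed mass of `[x, F x)` is the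
same for all `x`, so `h` semiconjugates `F` to the translation by `τ_μ(F)`. Therefore
`F^[k] x - x` and `k * τ_μ(F)` differ by a bounded amount. Additivity under composition is the
additivity of signed mass along `x`, `G x`, `F (G x)`.
-/

section SignedMass

open Set

section Preorder

variable {α : Type*} [Preorder α] [MeasurableSpace α] (μ : Measure α)

/-- The signed `μ`-mass of the half-open interval from `a` to `b`: `μ [a, b)` if `a ≤ b` and
`-μ [b, a)` if `b ≤ a`. One of the two terms vanishes because the corresponding interval is empty.
The mean translation number is the signed mass from `x` to `F x`. -/
noncomputable def signedMass (a b : α) : ℝ :=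
  μ.real (Ico a b) - μ.real (Ico b a)

theorem signedMass_of_le {a b : α} (hab : a ≤ b) : signedMass μ a b = μ.real (Ico a b) := by
  simp [signedMass, Ico_eq_empty_of_le hab]

theorem signedMass_of_ge {a b : α} (hba : b ≤ a) : signedMass μ a b = -μ.real (Ico b a) := by
  simp [signedMass, Ico_eq_empty_of_le hba]

end Preorder

variable {α : Type*} [LinearOrder α] [TopologicalSpace α] [ClosedIciTopology α]
  [MeasurableSpace α] [OpensMeasurableSpace α]

theorem signedMass_map_of_strictMono {β : Type*} [LinearOrder β] [MeasurableSpace β]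
    {μ : Measure β} {ν : Measure α} {f : β → α} (hf : MeasurePreserving f μ ν) (hfm : StrictMono f)
    (a b : β) : signedMass ν (f a) (f b) = signedMass μ a b := by
  have measure_Ico_map (a b : β) : ν.real (Ico (f a) (f b)) = μ.real (Ico a b) := by
    rw [← hf.measureReal_preimage nullMeasurableSet_Ico]
    exact congrArg μ.real ((OrderEmbedding.ofStrictMono f hfm).preimage_Ico a b)
  rw [signedMass, signedMass, measure_Ico_map, measure_Ico_map]

variable [CompactIccSpace α] (μ : Measure α) [IsFiniteMeasureOnCompacts μ]

theorem measureReal_Ico_add_Ico {a b c : α} (hab : a ≤ b) (hbc : b ≤ c) :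
    μ.real (Ico a b) + μ.real (Ico b c) = μ.real (Ico a c) := by
  have measure_Ico_ne_top (a b : α) : μ (Ico a b) ≠ ⊤ :=
    measure_ne_top_of_subset Ico_subset_Icc_self isCompact_Icc.measure_ne_top
  rw [← Ico_union_Ico_eq_Ico hab hbc, measureReal_union Ico_disjoint_Ico_same measurableSet_Ico
    (measure_Ico_ne_top a b) (measure_Ico_ne_top b c)]

theorem signedMass_eq_sub {a b c : α} (hca : c ≤ a) (hcb : c ≤ b) :
    signedMass μ a b = μ.real (Ico c b) - μ.real (Ico c a) := by
  rcases le_total a b with hab | hba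
  · rw [signedMass_of_le μ hab, ← measureReal_Ico_add_Ico μ hca hab, add_sub_cancel_left]
  · rw [signedMass_of_ge μ hba, ← measureReal_Ico_add_Ico μ hcb hba, sub_add_cancel_left]

theorem signedMass_add (a b c : α) :
    signedMass μ a b + signedMass μ b c = signedMass μ a c := by
  obtain ⟨hma, hmb, hmc⟩ : min a (min b c) ≤ a ∧ min a (min b c) ≤ b ∧ min a (min b c) ≤ c := by
    simp
  rw [signedMass_eq_sub μ hma hmb, signedMass_eq_sub μ hmb hmc, signedMass_eq_sub μ hma hmc,
    sub_add_sub_cancel']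

end SignedMass

section BoundedDisplacement

open Function Topology

theorem tendsto_inv_smul_iterate_sub_of_semiconj_add {E : Type*} [NormedAddCommGroup E]
    [NormedSpace ℝ E] {h f : E → E} {t : E} {C : ℝ} (hC : ∀ y, ‖h y - y‖ ≤ C)
    (hf : Semiconj h f (· + t)) (x : E) :
    Tendsto (fun k : ℕ => (k : ℝ)⁻¹ • (f^[k] x - x)) atTop (𝓝 t) := by
  have map_iterate (k : ℕ) : h (f^[k] x) = h x + k • t := by
    rw [(hf.iterate_right k).eq, add_right_iterate_apply]
  let r (k : ℕ) : E := (h x - x) - (h (f^[k] x) - f^[k] x)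
  have r_bounded : IsBoundedUnder (· ≤ ·) atTop (norm ∘ r) :=
    isBoundedUnder_of ⟨C + C, fun k => norm_sub_le_of_le (hC _) (hC _)⟩
  have r_negligible : Tendsto (fun k : ℕ => (k : ℝ)⁻¹ • r k) atTop (𝓝 0) :=
    tendsto_inv_atTop_nhds_zero_nat.zero_smul_isBoundedUnder_le r_bounded
  have t_add_r_tendsto : Tendsto (fun k : ℕ => t + (k : ℝ)⁻¹ • r k) atTop (𝓝 t) := by
    simpa only [add_zero] using r_negligible.const_add t
  refine t_add_r_tendsto.congr' ?_
  filter_upwards [eventually_ne_atTop 0] with k hk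
  have displacement_eq : f^[k] x - x = (k : ℝ) • t + r k := by
    simp only [r, map_iterate, Nat.cast_smul_eq_nsmul]
    abel
  rw [displacement_eq, smul_add, inv_smul_smul₀ (Nat.cast_ne_zero.mpr hk)]

theorem abs_circleDeg1Lift_sub_self_le {f : CircleDeg1Lift} (hf0 : f 0 = 0) (x : ℝ) :
    |f x - x| ≤ 1 := by
  have upper : f x ≤ ⌈x⌉ := by simpa [hf0] using f.map_le_of_map_zero x
  have lower : ⌊x⌋ ≤ f x := by simpa [hf0] using f.le_map_of_map_zero x
  rw [abs_le]
  constructor <;> linarith [Int.ceil_lt_add_one x, Int.lt_floor_add_one x]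

end BoundedDisplacement

section MeanTranslationNumber

variable (μ : Measure ℝ)

theorem meanTranslationNumber_eq_signedMass (F : ℝ → ℝ) (x : ℝ) :
    meanTranslationNumber μ F x = signedMass μ x (F x) := by
  rcases lt_trichotomy x (F x) with hx | hx | hx
  · rw [signedMass_of_le μ hx.le, meanTranslationNumber, if_pos hx, Measure.real]
  · simp [meanTranslationNumber, signedMass, ← hx]
  · rw [signedMass_of_ge μ hx.le, meanTranslationNumber, if_neg hx.not_gt, if_neg hx.ne,
      Measure.real]

variable [IsFiniteMeasureOnCompacts μ]

/-- The distribution function of `μ` normalised at `0`, as a lift of a degree one map of the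
circle; it semiconjugates the maps preserving `μ` to translations. -/
noncomputable def distributionLift (hμ1 : ∀ x : ℝ, μ (Set.Ico x (x + 1)) = 1) :
    CircleDeg1Lift where
  toFun x := signedMass μ 0 x
  monotone' a b hab := by
    beta_reduce
    rw [← signedMass_add μ 0 a b, signedMass_of_le μ hab]
    exact le_add_of_nonneg_right measureReal_nonneg
  map_add_one' x := by
    rw [← signedMass_add μ 0 x (x + 1), signedMass_of_le μ (lt_add_one x).le, Measure.real, hμ1,
      ENNReal.toReal_one]

theorem distributionLift_apply (hμ1 : ∀ x : ℝ, μ (Set.Ico x (x + 1)) = 1) (x : ℝ) :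
    distributionLift μ hμ1 x = signedMass μ 0 x := rfl

variable {μ} {F : ℝ → ℝ}

theorem meanTranslationNumber_eq_of_measurePreserving (hFm : StrictMono F)
    (hFμ : MeasurePreserving F μ μ) (x y : ℝ) :
    meanTranslationNumber μ F x = meanTranslationNumber μ F y := by
  have via_image := signedMass_add μ x (F x) (F y)
  have via_base := signedMass_add μ x y (F y)
  rw [signedMass_map_of_strictMono hFμ hFm] at via_image
  rw [meanTranslationNumber_eq_signedMass, meanTranslationNumber_eq_signedMass]
  linarith

theorem distributionLift_semiconj (hμ1 : ∀ x : ℝ, μ (Set.Ico x (x + 1)) = 1)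
    (hFm : StrictMono F) (hFμ : MeasurePreserving F μ μ) (x : ℝ) :
    Function.Semiconj (distributionLift μ hμ1) F (· + meanTranslationNumber μ F x) := by
  intro y
  beta_reduce
  rw [distributionLift_apply, distributionLift_apply,
    meanTranslationNumber_eq_of_measurePreserving hFm hFμ x y,
    meanTranslationNumber_eq_signedMass, signedMass_add]

theorem tendsto_iterate_sub_div_meanTranslationNumber
    (hμ1 : ∀ x : ℝ, μ (Set.Ico x (x + 1)) = 1) (hFm : StrictMono F)
    (hFμ : MeasurePreserving F μ μ) (x : ℝ) :
    Tendsto (fun k : ℕ => (F^[k] x - x) / (k : ℝ)) atTop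
      (nhds (meanTranslationNumber μ F x)) := by
  have lift_zero : distributionLift μ hμ1 0 = 0 := sub_self _
  simpa only [smul_eq_mul, inv_mul_eq_div] using
    tendsto_inv_smul_iterate_sub_of_semiconj_add (abs_circleDeg1Lift_sub_self_le lift_zero)
      (distributionLift_semiconj hμ1 hFm hFμ x) x

theorem meanTranslationNumber_comp (hFm : StrictMono F) (hFμ : MeasurePreserving F μ μ)
    (G : ℝ → ℝ) (x : ℝ) :
    meanTranslationNumber μ (F ∘ G) x =
      meanTranslationNumber μ F x + meanTranslationNumber μ G x := by
  rw [meanTranslationNumber_eq_of_measurePreserving hFm hFμ x (G x), add_comm]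
  simp only [meanTranslationNumber_eq_signedMass, Function.comp_apply, signedMass_add]

end MeanTranslationNumber

theorem meanTranslationNumber_props_general (μ : Measure ℝ) [IsFiniteMeasureOnCompacts μ]
    (hμ1 : ∀ x : ℝ, μ (Set.Ico x (x + 1)) = 1) (F G : ℝ → ℝ)
    (hFm : StrictMono F) (hFμ : MeasurePreserving F μ μ) :
    (∀ x y : ℝ, meanTranslationNumber μ F x = meanTranslationNumber μ F y) ∧
    (∀ x : ℝ, Tendsto (fun k : ℕ => (F^[k] x - x) / (k : ℝ)) atTop
      (nhds (meanTranslationNumber μ F x))) ∧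
    (∀ x : ℝ, meanTranslationNumber μ (F ∘ G) x =
      meanTranslationNumber μ F x + meanTranslationNumber μ G x) :=
  ⟨meanTranslationNumber_eq_of_measurePreserving hFm hFμ,
    tendsto_iterate_sub_div_meanTranslationNumber hμ1 hFm hFμ,
    meanTranslationNumber_comp hFm hFμ G⟩

/-- Let `μ` be a Borel measure on `ℝ`, finite on compacts, invariant under `T x = x + 1`,
with `μ [x, x+1) = 1` for all `x` (the lift of a probability measure on the circle).
If `F` is an orientation-preserving homeomorphism of `ℝ` commuting with `T` and
preserving `μ`, then the mean translation number of `F` is independent of the base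
point, equals the translation number `lim (Fⁿ(x) − x)/n`, and is additive:
`τ_μ(F ∘ G) = τ_μ(F) + τ_μ(G)` for `G` satisfying the same hypotheses. -/
theorem meanTranslationNumber_props (μ : Measure ℝ) [IsFiniteMeasureOnCompacts μ]
    (hμ1 : ∀ x : ℝ, μ (Set.Ico x (x + 1)) = 1)
    (hμT : MeasurePreserving (fun x : ℝ => x + 1) μ μ)
    (F G : ℝ → ℝ)
    (hFm : StrictMono F) (hFs : Function.Surjective F)
    (hFT : ∀ x, F (x + 1) = F x + 1) (hFμ : MeasurePreserving F μ μ)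
    (hGm : StrictMono G) (hGs : Function.Surjective G)
    (hGT : ∀ x, G (x + 1) = G x + 1) (hGμ : MeasurePreserving G μ μ) :
    (∀ x y : ℝ, meanTranslationNumber μ F x = meanTranslationNumber μ F y) ∧
    (∀ x : ℝ, Tendsto (fun k : ℕ => (F^[k] x - x) / (k : ℝ)) atTop
      (nhds (meanTranslationNumber μ F x))) ∧
    (∀ x : ℝ, meanTranslationNumber μ (F ∘ G) x =
      meanTranslationNumber μ F x + meanTranslationNumber μ G x) := by
  exact meanTranslationNumber_props_general μ hμ1 F G hFm hFμ
end

section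
/- Suppose f₀ and g₀ are orientation-preserving homeomorphisms of the circle S¹ = ℝ/ℤ which both preserve a Borel probability measure μ₀ on S¹, and suppose their rotation numbers are equal: ρ(f₀) = ρ(g₀). Then f₀(x) = g₀(x) for every x in the topological support of μ₀. -/
open MeasureTheory

/-!
Lift `μ₀` to `ℝ` and let `φ` be its distribution function, so that `φ b - φ a` is the measure of
the arc from `a` to `b`. A lift `F` of a homeomorphism preserving `μ₀` satisfies
`φ ∘ F = φ + c`, and since `φ` is itself a monotone map of degree one, it semiconjugates `F` to
a translation, whence `c` is the translation number of `F`. If the translation numbers of `F` and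
`G` agree, then `φ` takes the same value at `F x` and `G x` for every `x`. If moreover
`F x < m < G x`, then the points `b = F⁻¹ m` and `a = G⁻¹ m` satisfy `a < x < b` and `φ a = φ b`,
so the arc from `a` to `b` is a null neighbourhood of `x`.
-/

section

open Set Function

section Semiconj

variable {α β : Type*} [LinearOrder α] [DenselyOrdered α] {φ : α → β} {S : β → β} {f g : α → α}
  {x : α}

theorem le_of_semiconj_of_forall_ne (hf : Monotone f) (hg : Monotone g) (hf' : Surjective f)
    (hg' : Surjective g) (hS : Injective S) (hφf : Semiconj φ f S) (hφg : Semiconj φ g S)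
    (hx : ∀ a b, a < x → x < b → φ a ≠ φ b) : g x ≤ f x := by
  by_contra! hlt
  obtain ⟨m, hfm, hmg⟩ := exists_between hlt
  obtain ⟨b, rfl⟩ := hf' m
  obtain ⟨a, hab⟩ := hg' (f b)
  have hax : a < x := hg.reflect_lt (hab.trans_lt hmg)
  have hxb : x < b := hf.reflect_lt hfm
  exact hx a b hax hxb (hS (by rw [← hφg.eq, ← hφf.eq, hab]))

theorem eq_of_semiconj_of_forall_ne (hf : Monotone f) (hg : Monotone g) (hf' : Surjective f)
    (hg' : Surjective g) (hS : Injective S) (hφf : Semiconj φ f S) (hφg : Semiconj φ g S)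
    (hx : ∀ a b, a < x → x < b → φ a ≠ φ b) : f x = g x :=
  le_antisymm (le_of_semiconj_of_forall_ne hg hf hg' hf' hS hφg hφf hx)
    (le_of_semiconj_of_forall_ne hf hg hf' hg' hS hφf hφg hx)

end Semiconj

section Arc

variable {T a b c : ℝ}

/-- The half-open arc of the circle `ℝ / Tℤ` running counterclockwise from `a` to `b`, as the image
of `[a, b)`; it is empty if `b ≤ a` and may wrap around the circle several times. -/
def arc (a b : ℝ) : Set (AddCircle T) :=
  (↑) '' Ico a b

theorem coe_mem_arc_iff {x : ℝ} :
    (x : AddCircle T) ∈ arc a b ↔ ∃ n : ℤ, x + n • T ∈ Ico a b := by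
  simp only [arc, mem_image, eq_comm (b := (x : AddCircle T)),
    ← AddCommGroup.modEq_iff_eq_mod_zmultiples, AddCommGroup.modEq_iff_eq_add_zsmul]
  grind

theorem arc_subset_arc_right (hbc : b ≤ c) : (arc a b : Set (AddCircle T)) ⊆ arc a c :=
  image_mono (Ico_subset_Ico_right hbc)

theorem arc_mem_nhds {x : ℝ} (hax : a < x) (hxb : x < b) : arc a b ∈ nhds (x : AddCircle T) :=
  QuotientAddGroup.isOpenMap_coe.image_mem_nhds (Ico_mem_nhds hax hxb)

theorem arc_add_period (a b : ℝ) : (arc (a + T) (b + T) : Set (AddCircle T)) = arc a b := by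
  simp only [arc, ← image_add_const_Ico, image_image, AddCircle.coe_add_period]

theorem arc_union_arc (hab : a ≤ b) (hbc : b ≤ c) :
    (arc a b ∪ arc b c : Set (AddCircle T)) = arc a c := by
  rw [arc, arc, ← image_union, Ico_union_Ico_eq_Ico hab hbc, arc]

variable [Fact (0 < T)]

theorem injOn_coe_Ico (hab : b ≤ a + T) : InjOn ((↑) : ℝ → AddCircle T) (Ico a b) := by
  have hsub : Ico a b ⊆ Ico a (a + T) := Ico_subset_Ico_right hab
  exact fun _ hx _ hy h ↦ (AddCircle.coe_eq_coe_iff_of_mem_Ico (hsub hx) (hsub hy)).1 h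

theorem measurableSet_arc (hab : b ≤ a + T) : MeasurableSet (arc a b : Set (AddCircle T)) :=
  measurableSet_Ico.image_of_continuousOn_injOn
    (AddCircle.continuous_mk' T).continuousOn (injOn_coe_Ico hab)

theorem disjoint_arc (hab : a ≤ b) (hbc : b ≤ c) (hca : c ≤ a + T) :
    Disjoint (arc a b : Set (AddCircle T)) (arc b c) :=
  Ico_disjoint_Ico_same.image (injOn_coe_Ico hca) (Ico_subset_Ico_right hbc)
    (Ico_subset_Ico_left hab)

theorem measureReal_arc_add_measureReal_arc (μ : Measure (AddCircle T)) [IsFiniteMeasure μ]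
    (hab : a ≤ b) (hbc : b ≤ c) (hca : c ≤ a + T) :
    μ.real (arc a b) + μ.real (arc b c) = μ.real (arc a c) := by
  have hmeas : MeasurableSet (arc b c : Set (AddCircle T)) := measurableSet_arc (by linarith)
  rw [← measureReal_union (disjoint_arc hab hbc hca) hmeas, arc_union_arc hab hbc]

end Arc

section CdfLift

variable (μ : Measure UnitAddCircle) [IsProbabilityMeasure μ]

/-- The distribution function of the lift of `μ` to `ℝ`, normalised to agree with the identity on
`ℤ`, as a monotone map of degree one. -/
noncomputable def cdfLift : CircleDeg1Lift where
  toFun x := ⌊x⌋ + μ.real (arc ⌊x⌋ x)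
  monotone' x y hxy := by
    rcases (Int.floor_mono hxy).eq_or_lt with heq | hlt
    · simp only [heq]
      exact add_le_add_right (measureReal_mono (arc_subset_arc_right hxy)) _
    · calc
        ⌊x⌋ + μ.real (arc ⌊x⌋ x) ≤ ⌊x⌋ + 1 := by gcongr; exact measureReal_le_one
        _ ≤ ⌊y⌋ := by exact_mod_cast hlt
        _ ≤ ⌊y⌋ + μ.real (arc ⌊y⌋ y) := le_add_of_nonneg_right measureReal_nonneg
  map_add_one' x := by
    rw [Int.floor_add_one, Int.cast_add, Int.cast_one, arc_add_period, add_right_comm]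

theorem cdfLift_apply (x : ℝ) : cdfLift μ x = ⌊x⌋ + μ.real (arc ⌊x⌋ x) :=
  rfl

theorem cdfLift_add_measureReal_arc {x y : ℝ} (hxy : x ≤ y) (hyx : y ≤ x + 1) :
    cdfLift μ x + μ.real (arc x y) = cdfLift μ y := by
  have hx : ⌊x⌋ ≤ x := Int.floor_le x
  have hx' : x ≤ ⌊x⌋ + 1 := (Int.lt_floor_add_one x).le
  simp only [cdfLift_apply]
  rcases lt_or_ge y (⌊x⌋ + 1) with hy | hy
  · have hfloor : ⌊y⌋ = ⌊x⌋ := Int.floor_eq_iff.2 ⟨hx.trans hxy, hy⟩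
    rw [hfloor, add_assoc, measureReal_arc_add_measureReal_arc μ hx hxy hy.le]
  · have hfloor : ⌊y⌋ = ⌊x⌋ + 1 := Int.floor_eq_iff.2 ⟨by simpa using hy,
      by push_cast; linarith [Int.lt_floor_add_one x]⟩
    have htotal : μ.real (arc ⌊x⌋ x) + μ.real (arc x (⌊x⌋ + 1)) = 1 := by
      rw [measureReal_arc_add_measureReal_arc μ hx hx' le_rfl, arc, AddCircle.coe_image_Ico_eq,
        probReal_univ]
    rw [hfloor, ← measureReal_arc_add_measureReal_arc μ hx' hy hyx]
    push_cast
    linarith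

theorem cdfLift_lt_of_mem_support {a b x : ℝ} (hx : (x : UnitAddCircle) ∈ μ.support) (hax : a < x)
    (hxb : x < b) : cdfLift μ a < cdfLift μ b := by
  obtain ⟨a', ha', ha'x⟩ : ∃ a', max a (x - 1 / 2) ≤ a' ∧ a' < x := ⟨_, le_rfl, by simp [hax]⟩
  obtain ⟨b', hxb', hb'⟩ : ∃ b', x < b' ∧ b' ≤ min b (x + 1 / 2) := ⟨_, by simp [hxb], le_rfl⟩
  rw [max_le_iff] at ha'
  rw [le_min_iff] at hb'
  have hpos : 0 < μ.real (arc a' b') :=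
    ENNReal.toReal_pos ((Measure.mem_support_iff_forall _).1 hx _ (arc_mem_nhds ha'x hxb')).ne'
      (measure_ne_top _ _)
  calc
    cdfLift μ a ≤ cdfLift μ a' := (cdfLift μ).monotone ha'.1
    _ < cdfLift μ a' + μ.real (arc a' b') := lt_add_of_pos_right _ hpos
    _ = cdfLift μ b' := cdfLift_add_measureReal_arc μ (by linarith) (by linarith)
    _ ≤ cdfLift μ b := (cdfLift μ).monotone hb'.1

end CdfLift

section Lift

variable {F : CircleDeg1Lift} {f : UnitAddCircle → UnitAddCircle}

theorem preimage_arc_of_lift (hF : StrictMono F) (hf : ∀ x : ℝ, f x = F x) (a b : ℝ) :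
    f ⁻¹' arc (F a) (F b) = arc a b := by
  ext p
  obtain ⟨x, rfl⟩ := QuotientAddGroup.mk_surjective p
  simp only [mem_preimage, hf, coe_mem_arc_iff, zsmul_one, ← F.map_add_int, mem_Ico, hF.le_iff_le,
    hF.lt_iff_lt]

variable {μ : Measure UnitAddCircle} [IsProbabilityMeasure μ]

theorem cdfLift_map_sub_cdfLift_map (hF : StrictMono F) (hf : ∀ x : ℝ, f x = F x)
    (hμ : MeasurePreserving f μ μ) {x y : ℝ} (hxy : x ≤ y) (hyx : y ≤ x + 1) :
    cdfLift μ (F y) - cdfLift μ (F x) = cdfLift μ y - cdfLift μ x := by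
  have hFyx : F y ≤ F x + 1 := F.map_add_one x ▸ F.monotone hyx
  have harc : μ.real (arc (F x) (F y)) = μ.real (arc x y) := by
    rw [← preimage_arc_of_lift hF hf x y,
      hμ.measureReal_preimage (measurableSet_arc hFyx).nullMeasurableSet]
  rw [← cdfLift_add_measureReal_arc μ (F.monotone hxy) hFyx, harc,
    ← cdfLift_add_measureReal_arc μ hxy hyx]
  ring

theorem semiconj_cdfLift_translate (hF : StrictMono F) (hf : ∀ x : ℝ, f x = F x)
    (hμ : MeasurePreserving f μ μ) :
    Semiconj (cdfLift μ) F
      (CircleDeg1Lift.translate (Multiplicative.ofAdd (cdfLift μ (F 0) - cdfLift μ 0))) := by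
  intro x
  have hfract := cdfLift_map_sub_cdfLift_map hF hf hμ (Int.fract_nonneg x)
    (by linarith [Int.fract_lt_one x])
  have hφF := (cdfLift μ * F).map_fract_sub_fract_eq x
  have hφ := (cdfLift μ).map_fract_sub_fract_eq x
  simp only [CircleDeg1Lift.mul_apply] at hφF
  rw [CircleDeg1Lift.translate_apply]
  linarith

theorem semiconj_cdfLift_add_translationNumber (hF : StrictMono F) (hf : ∀ x : ℝ, f x = F x)
    (hμ : MeasurePreserving f μ μ) : Semiconj (cdfLift μ) F (· + F.translationNumber) := by
  have hsemiconj := semiconj_cdfLift_translate hF hf hμ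
  intro x
  rw [CircleDeg1Lift.translationNumber_eq_of_semiconj hsemiconj,
    CircleDeg1Lift.translationNumber_translate, hsemiconj.eq, CircleDeg1Lift.translate_apply,
    add_comm]

theorem lift_eq_add_intCast_of_mem_support {G : CircleDeg1Lift} {g : UnitAddCircle → UnitAddCircle}
    (hFm : StrictMono F) (hGm : StrictMono G) (hFs : Surjective F) (hGs : Surjective G)
    (hf : ∀ x : ℝ, f x = F x) (hg : ∀ x : ℝ, g x = G x) (hfμ : MeasurePreserving f μ μ)
    (hgμ : MeasurePreserving g μ μ) {k : ℤ} (hk : F.translationNumber = G.translationNumber + k)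
    {x : ℝ} (hx : (x : UnitAddCircle) ∈ μ.support) : F x = G x + k := by
  have hφF : Semiconj (cdfLift μ) F (· + F.translationNumber) :=
    semiconj_cdfLift_add_translationNumber hFm hf hfμ
  have hφG : Semiconj (cdfLift μ) (fun y ↦ G y + k) (· + F.translationNumber) := fun y ↦ by
    rw [CircleDeg1Lift.map_add_int, semiconj_cdfLift_add_translationNumber hGm hg hgμ, hk,
      add_assoc]
  have hGs' : Surjective fun y ↦ G y + k := (add_right_surjective (k : ℝ)).comp hGs
  exact eq_of_semiconj_of_forall_ne F.monotone (G.monotone.add_const _) hFs hGs'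
    (add_left_injective _) hφF hφG fun _ _ hax hxb ↦ (cdfLift_lt_of_mem_support μ hx hax hxb).ne

end Lift

end

/-- If two orientation-preserving circle homeomorphisms `f₀, g₀` (given by lifts
`F, G : ℝ → ℝ` which are increasing homeomorphisms of `ℝ` commuting with `x ↦ x + 1`)
both preserve a Borel probability measure `μ₀` on `S¹ = ℝ/ℤ` and have equal rotation
numbers (their translation numbers differ by an integer), then `f₀ = g₀` on the
topological support of `μ₀` (the points all of whose open neighborhoods have positive
measure). -/
theorem eq_on_support_of_equal_rotation_number
    (F G : ℝ → ℝ) (hFm : Monotone F) (hGm : Monotone G)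
    (hFsm : StrictMono F) (hGsm : StrictMono G)
    (hFs : Function.Surjective F) (hGs : Function.Surjective G)
    (hFT : ∀ x, F (x + 1) = F x + 1) (hGT : ∀ x, G (x + 1) = G x + 1)
    (f₀ g₀ : AddCircle (1 : ℝ) → AddCircle (1 : ℝ))
    (hfF : ∀ x : ℝ, f₀ ↑x = ↑(F x)) (hgG : ∀ x : ℝ, g₀ ↑x = ↑(G x))
    (μ₀ : Measure (AddCircle (1 : ℝ))) [IsProbabilityMeasure μ₀]
    (hfμ : MeasurePreserving f₀ μ₀ μ₀) (hgμ : MeasurePreserving g₀ μ₀ μ₀)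
    (hρ : ∃ k : ℤ,
      (⟨⟨F, hFm⟩, hFT⟩ : CircleDeg1Lift).translationNumber =
        (⟨⟨G, hGm⟩, hGT⟩ : CircleDeg1Lift).translationNumber + k) :
    ∀ p : AddCircle (1 : ℝ),
      (∀ U : Set (AddCircle (1 : ℝ)), IsOpen U → p ∈ U → 0 < μ₀ U) →
      f₀ p = g₀ p := by
  obtain ⟨k, hk⟩ := hρ
  intro p hp
  obtain ⟨x, rfl⟩ := QuotientAddGroup.mk_surjective p
  have hsupp : (x : UnitAddCircle) ∈ μ₀.support := by
    rw [Measure.support_eq_forall_isOpen]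
    exact fun U hxU hU ↦ hp U hU hxU
  have hFG : F x = G x + k :=
    lift_eq_add_intCast_of_mem_support (F := ⟨⟨F, hFm⟩, hFT⟩) (G := ⟨⟨G, hGm⟩, hGT⟩) hFsm hGsm hFs
      hGs hfF hgG hfμ hgμ hk hsupp
  rw [hfF, hgG, eq_comm, ← AddCommGroup.modEq_iff_eq_mod_zmultiples,
    AddCommGroup.modEq_iff_eq_add_zsmul]
  exact ⟨k, by rw [hFG, zsmul_one]⟩
end

section
/- Let f and g be commuting orientation-preserving C² diffeomorphisms of I = [0,1]. Then f maps every connected component of Fix(g) onto itself (and vice versa), and the frontier ∂Fix(f) = Fix(f) \ Int(Fix(f)) is contained in Fix(g) (and vice versa). In particular, if both Fix(f) and Fix(g) have empty interior, then Fix(f) = Fix(g). -/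
/-- The fixed point set of a self-map of `I = [0,1]`, as a subset of `ℝ`. -/
def fixedIn (f : ℝ → ℝ) : Set ℝ := {x | x ∈ Set.Icc (0 : ℝ) 1 ∧ f x = x}

/-!
The proof is Kopell's argument. Suppose that `f x = x` and `g x ≠ x`. Then `f` fixes the whole
orbit `g^[n] x`, which converges to some `p`, so `f' p = 1`. Differentiating the identity
`f ∘ g^[n] = g^[n] ∘ f` at a point `y` between `x` and `g x` writes `f' y` as `f' (g^[n] y)`, which
tends to `f' p = 1`, times the quotient of the derivatives of `g^[n]` at `y` and at `f y`. The
intervals between consecutive points of the orbit of `x` do not overlap, so this quotient is at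
most `exp V`, where `V` is the total variation of `log g'`. The bound `f' y ≤ exp V` does not
depend on `f`, hence it also holds for all iterates of `f`. A monotone map whose iterates are
uniformly Lipschitz between two fixed points is the identity there, so `f` is the identity between
`x` and `g x`. Applied to `x` and to its preimage under `g`, this puts `x` in the interior of the
fixed point set of `f`. In particular `g` fixes the end points of every component of that set.
-/

section

open Set Filter Topology Function
open scoped NNReal

theorem isFixedPt_map_of_eqOn_comp {α : Type*} {f g : α → α} {s : Set α}
    (hcomm : EqOn (f ∘ g) (g ∘ f) s) {x : α} (hx : x ∈ s) (hfx : IsFixedPt f x) :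
    IsFixedPt f (g x) :=
  (hcomm hx).trans (congrArg g hfx)

theorem eqOn_comp_iterate {α : Type*} {f g : α → α} {s : Set α} (hg : MapsTo g s s)
    (hcomm : EqOn (f ∘ g) (g ∘ f) s) (n : ℕ) : EqOn (f ∘ g^[n]) (g^[n] ∘ f) s := by
  intro x hx
  induction n with
  | zero => rfl
  | succ n ih =>
    rw [iterate_succ']
    exact (hcomm (hg.iterate n hx)).trans (congrArg g ih)

theorem mapsTo_uIcc_of_isFixedPt {α : Type*} [LinearOrder α] {f : α → α} {p q : α}
    (hf : MonotoneOn f (uIcc p q)) (hp : IsFixedPt f p) (hq : IsFixedPt f q) :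
    MapsTo f (uIcc p q) (uIcc p q) :=
  mapsTo_iff_image_subset.2 (by simpa only [hp.eq, hq.eq] using hf.image_uIcc_subset)

theorem iterate_monotone_or_antitone_of_monotoneOn {α : Type*} [LinearOrder α] {f : α → α}
    {s : Set α} (hf : MonotoneOn f s) (hs : MapsTo f s s) {x : α} (hx : x ∈ s) :
    Monotone (f^[·] x) ∨ Antitone (f^[·] x) := by
  have hmono : Monotone (hs.restrict f s s) := fun u v huv ↦ hf u.2 v.2 huv
  have hcoe (n : ℕ) : ((hs.restrict f s s)^[n] ⟨x, hx⟩ : α) = f^[n] x :=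
    hs.coe_iterate_restrict ⟨x, hx⟩ n
  refine (le_total x (f x)).imp (fun hle m n hmn ↦ ?_) (fun hle m n hmn ↦ ?_)
  · simpa only [← Subtype.coe_le_coe, hcoe] using
      hmono.monotone_iterate_of_le_map (x := ⟨x, hx⟩) hle hmn
  · simpa only [← Subtype.coe_le_coe, hcoe] using
      hmono.antitone_iterate_of_map_le (x := ⟨x, hx⟩) hle hmn

theorem iterate_mem_uIcc_of_monotoneOn {α : Type*} [LinearOrder α] {f : α → α} {s : Set α}
    [OrdConnected s] (hf : MonotoneOn f s) (hs : MapsTo f s s) {x y : α} (hx : x ∈ s)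
    (hy : y ∈ uIcc x (f x)) (n : ℕ) : f^[n] y ∈ uIcc (f^[n] x) (f^[n + 1] x) := by
  induction n with
  | zero => exact hy
  | succ n ih =>
    rw [iterate_succ_apply' f n x] at ih
    rw [iterate_succ_apply' f (n + 1) x, iterate_succ_apply' f n x, iterate_succ_apply' f n y]
    have hsub : uIcc (f^[n] x) (f (f^[n] x)) ⊆ s :=
      OrdConnected.uIcc_subset ‹_› (hs.iterate n hx) (hs (hs.iterate n hx))
    exact (hf.mono hsub).image_uIcc_subset (mem_image_of_mem f ih)

theorem exists_isFixedPt_tendsto_iterate {α : Type*} [ConditionallyCompleteLinearOrder α]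
    [TopologicalSpace α] [OrderTopology α] {f : α → α} {s : Set α} (hs : IsCompact s)
    (hmono : MonotoneOn f s) (hcont : ContinuousOn f s) (hmaps : MapsTo f s s) {x : α}
    (hx : x ∈ s) : ∃ p ∈ s, IsFixedPt f p ∧ Tendsto (f^[·] x) atTop (𝓝 p) := by
  have horbit (n : ℕ) : f^[n] x ∈ s := hmaps.iterate n hx
  have hrange : range (f^[·] x) ⊆ s := range_subset_iff.2 horbit
  obtain ⟨p, hp⟩ : ∃ p, Tendsto (f^[·] x) atTop (𝓝 p) := by
    rcases iterate_monotone_or_antitone_of_monotoneOn hmono hmaps hx with h | h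
    · exact ⟨_, tendsto_atTop_ciSup h (hs.bddAbove.mono hrange)⟩
    · exact ⟨_, tendsto_atTop_ciInf h (hs.bddBelow.mono hrange)⟩
  have hps : p ∈ s := hs.isClosed.mem_of_tendsto hp (.of_forall horbit)
  have hfp : Tendsto (fun n ↦ f (f^[n] x)) atTop (𝓝 (f p)) :=
    (hcont p hps).tendsto.comp (tendsto_nhdsWithin_iff.2 ⟨hp, .of_forall horbit⟩)
  refine ⟨p, hps, tendsto_nhds_unique hfp ?_, hp⟩
  simpa only [comp_def, iterate_succ_apply'] using hp.comp (tendsto_add_atTop_nat 1)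

/- The pointwise limit `φ` of the iterates takes its values in the fixed points of `f`. It is
Lipschitz and fixes `p` and `q`, so by the intermediate value theorem it is onto `[p, q]`. -/
theorem isFixedPt_of_lipschitzOnWith_iterate {f : ℝ → ℝ} {p q : ℝ} {K : ℝ≥0}
    (hmono : MonotoneOn f (uIcc p q)) (hp : IsFixedPt f p) (hq : IsFixedPt f q)
    (hlip : ∀ n, LipschitzOnWith K f^[n] (uIcc p q)) {z : ℝ} (hz : z ∈ uIcc p q) :
    IsFixedPt f z := by
  have hmaps : MapsTo f (uIcc p q) (uIcc p q) :=
    mapsTo_uIcc_of_isFixedPt hmono hp hq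
  choose! φ _ hφfix hφlim using fun z (hz : z ∈ uIcc p q) ↦
    exists_isFixedPt_tendsto_iterate isCompact_uIcc hmono (hlip 1).continuousOn hmaps hz
  have hφ_eq {c : ℝ} (hc : c ∈ uIcc p q) (hfc : IsFixedPt f c) : φ c = c :=
    tendsto_nhds_unique (hφlim c hc) (by simp only [(hfc.iterate _).eq, tendsto_const_nhds])
  have hφlip : LipschitzOnWith K φ (uIcc p q) := LipschitzOnWith.of_dist_le_mul fun u hu v hv ↦
    le_of_tendsto' ((hφlim u hu).dist (hφlim v hv)) fun n ↦ (hlip n).dist_le_mul u hu v hv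
  obtain ⟨w, hw, rfl⟩ : z ∈ φ '' uIcc p q := intermediate_value_uIcc hφlip.continuousOn <| by
    rwa [hφ_eq left_mem_uIcc hp, hφ_eq right_mem_uIcc hq]
  exact hφfix w hw

theorem eVariationOn_uIcc_add_uIcc {α E : Type*} [LinearOrder α] [PseudoEMetricSpace E]
    (φ : α → E) {a b c : α} (hb : b ∈ uIcc a c) :
    eVariationOn φ (uIcc a b) + eVariationOn φ (uIcc b c) = eVariationOn φ (uIcc a c) := by
  wlog hac : a ≤ c generalizing a c
  · rw [uIcc_comm a c] at hb ⊢
    rw [← this hb (le_of_not_ge hac), add_comm, uIcc_comm b c, uIcc_comm b a]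
  rw [uIcc_of_le hac] at hb ⊢
  rw [uIcc_of_le hb.1, uIcc_of_le hb.2]
  simpa only [univ_inter] using eVariationOn.Icc_add_Icc φ hb.1 hb.2 (mem_univ b)

theorem sum_eVariationOn_uIcc {α E : Type*} [LinearOrder α] [PseudoEMetricSpace E]
    (φ : α → E) {u : ℕ → α} (hu : Monotone u ∨ Antitone u) (n : ℕ) :
    ∑ i ∈ Finset.range n, eVariationOn φ (uIcc (u i) (u (i + 1))) =
      eVariationOn φ (uIcc (u 0) (u n)) := by
  induction n with
  | zero => simp
  | succ n ih =>
    rw [Finset.sum_range_succ, ih]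
    refine eVariationOn_uIcc_add_uIcc φ (mem_uIcc.2 ?_)
    exact hu.imp (fun h ↦ ⟨h (n.zero_le), h n.le_succ⟩) (fun h ↦ ⟨h n.le_succ, h (n.zero_le)⟩)

theorem sum_edist_iterate_le_eVariationOn {α E : Type*} [LinearOrder α] [PseudoEMetricSpace E]
    (φ : α → E) {g : α → α} {s : Set α} [OrdConnected s] (hg : MonotoneOn g s)
    (hs : MapsTo g s s) {x y z : α} (hx : x ∈ s) (hy : y ∈ uIcc x (g x))
    (hz : z ∈ uIcc x (g x)) (n : ℕ) :
    ∑ i ∈ Finset.range n, edist (φ (g^[i] y)) (φ (g^[i] z)) ≤ eVariationOn φ s := calc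
  _ ≤ ∑ i ∈ Finset.range n, eVariationOn φ (uIcc (g^[i] x) (g^[i + 1] x)) :=
    Finset.sum_le_sum fun i _ ↦ eVariationOn.edist_le φ
      (iterate_mem_uIcc_of_monotoneOn hg hs hx hy i) (iterate_mem_uIcc_of_monotoneOn hg hs hx hz i)
  _ = eVariationOn φ (uIcc x (g^[n] x)) :=
    sum_eVariationOn_uIcc φ (iterate_monotone_or_antitone_of_monotoneOn hg hs hx) n
  _ ≤ eVariationOn φ s :=
    eVariationOn.mono φ (OrdConnected.uIcc_subset ‹_› hx (hs.iterate n hx))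

theorem sum_iterate_le_add_eVariationOn {α : Type*} [LinearOrder α] {φ : α → ℝ} {g : α → α}
    {s : Set α} [OrdConnected s] (hφ : BoundedVariationOn φ s) (hg : MonotoneOn g s)
    (hs : MapsTo g s s) {x y z : α} (hx : x ∈ s) (hy : y ∈ uIcc x (g x))
    (hz : z ∈ uIcc x (g x)) (n : ℕ) :
    ∑ i ∈ Finset.range n, φ (g^[i] y) ≤
      (eVariationOn φ s).toReal + ∑ i ∈ Finset.range n, φ (g^[i] z) := by
  rw [← sub_le_iff_le_add, ← Finset.sum_sub_distrib]
  calc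
    _ ≤ ∑ i ∈ Finset.range n, dist (φ (g^[i] y)) (φ (g^[i] z)) :=
      Finset.sum_le_sum fun i _ ↦ le_abs_self _
    _ = (∑ i ∈ Finset.range n, edist (φ (g^[i] y)) (φ (g^[i] z))).toReal := by
      rw [ENNReal.toReal_sum fun i _ ↦ edist_ne_top _ _]
      simp only [dist_edist]
    _ ≤ (eVariationOn φ s).toReal :=
      ENNReal.toReal_mono hφ (sum_edist_iterate_le_eVariationOn φ hg hs hx hy hz n)

theorem eq_one_of_hasDerivWithinAt_of_accPt_fixedPoints {𝕜 : Type*} [NontriviallyNormedField 𝕜]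
    {f : 𝕜 → 𝕜} {m p : 𝕜} {s : Set 𝕜} (hf : HasDerivWithinAt f m s p) (hp : IsFixedPt f p)
    (hacc : AccPt p (𝓟 (s ∩ fixedPoints f))) : m = 1 :=
  hacc.uniqueDiffWithinAt.eq_deriv _ (hf.mono inter_subset_left)
    ((hasDerivWithinAt_id p _).congr (fun _ hx ↦ hx.2) hp)

theorem boundedVariationOn_Icc_of_contDiffOn {E : Type*} [NormedAddCommGroup E] [NormedSpace ℝ E]
    {φ : ℝ → E} {a b : ℝ} (hφ : ContDiffOn ℝ 1 φ (Icc a b)) : BoundedVariationOn φ (Icc a b) := by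
  rcases lt_or_ge b a with hab | hab
  · simp [BoundedVariationOn, Icc_eq_empty_of_lt hab]
  obtain ⟨K, hK⟩ := hφ.exists_lipschitzOnWith one_ne_zero (convex_Icc a b) isCompact_Icc
  simpa using hK.locallyBoundedVariationOn a b (left_mem_Icc.2 hab) (right_mem_Icc.2 hab)

theorem boundedVariationOn_log_derivWithin {f : ℝ → ℝ} {a b : ℝ} (hab : a < b)
    (hf : ContDiffOn ℝ 2 f (Icc a b)) (hpos : ∀ x ∈ Icc a b, 0 < derivWithin f (Icc a b) x) :
    BoundedVariationOn (fun t ↦ Real.log (derivWithin f (Icc a b) t)) (Icc a b) :=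
  boundedVariationOn_Icc_of_contDiffOn <|
    (hf.derivWithin (uniqueDiffOn_Icc hab) one_add_one_eq_two.le).log fun x hx ↦ (hpos x hx).ne'

theorem connectedComponentIn_inter_interior_subset {X : Type*} [TopologicalSpace X]
    [LocallyConnectedSpace X] (S : Set X) (x : X) :
    connectedComponentIn S x ∩ interior S ⊆ interior (connectedComponentIn S x) := by
  rintro y ⟨hyC, hyS⟩
  rw [connectedComponentIn_eq hyC]
  exact mem_interior_iff_mem_nhds.2
    (connectedComponentIn_mem_nhds (mem_interior_iff_mem_nhds.1 hyS))

theorem isClosed_connectedComponentIn {X : Type*} [TopologicalSpace X] {S : Set X}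
    (hS : IsClosed S) (x : X) : IsClosed (connectedComponentIn S x) := by
  by_cases hx : x ∈ S
  · exact isClosed_of_closure_subset <|
      isPreconnected_connectedComponentIn.closure.subset_connectedComponentIn
        (subset_closure (mem_connectedComponentIn hx))
        (closure_minimal (connectedComponentIn_subset S x) hS)
  · simp [connectedComponentIn_eq_empty hx]

theorem exists_connectedComponentIn_eq_Icc {S : Set ℝ} (hS : IsCompact S) {x : ℝ} (hx : x ∈ S) :
    ∃ p q, p ≤ q ∧ connectedComponentIn S x = Icc p q ∧
      p ∈ S \ interior S ∧ q ∈ S \ interior S := by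
  have hconn : IsConnected (connectedComponentIn S x) := isConnected_connectedComponentIn_iff.2 hx
  have hcpt : IsCompact (connectedComponentIn S x) :=
    hS.of_isClosed_subset (isClosed_connectedComponentIn hS.isClosed x)
      (connectedComponentIn_subset S x)
  obtain ⟨p, q, hC⟩ : ∃ p q, connectedComponentIn S x = Icc p q :=
    ⟨_, _, eq_Icc_of_connected_compact hconn hcpt⟩
  have hpq : p ≤ q := nonempty_Icc.1 (hC ▸ hconn.nonempty)
  have hsub : Icc p q ∩ interior S ⊆ Ioo p q := by
    simpa only [hC, interior_Icc] using connectedComponentIn_inter_interior_subset S x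
  have hCS : Icc p q ⊆ S := hC ▸ connectedComponentIn_subset S x
  have hp : p ∈ Icc p q := left_mem_Icc.2 hpq
  have hq : q ∈ Icc p q := right_mem_Icc.2 hpq
  exact ⟨p, q, hpq, hC, ⟨hCS hp, fun h ↦ (hsub ⟨hp, h⟩).1.false⟩,
    ⟨hCS hq, fun h ↦ (hsub ⟨hq, h⟩).2.false⟩⟩

theorem image_connectedComponentIn_of_fixed_frontier {f : ℝ → ℝ} {S : Set ℝ} (hS : IsCompact S)
    (hmono : MonotoneOn f S) (hcont : ContinuousOn f S)
    (hfix : S \ interior S ⊆ fixedPoints f) {x : ℝ} (hx : x ∈ S) :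
    f '' connectedComponentIn S x = connectedComponentIn S x := by
  obtain ⟨p, q, hpq, hC, hp, hq⟩ := exists_connectedComponentIn_eq_Icc hS hx
  have hCS : Icc p q ⊆ S := hC ▸ connectedComponentIn_subset S x
  have hfp : f p = p := hfix hp
  have hfq : f q = q := hfix hq
  rw [hC, (hcont.mono hCS).image_Icc_of_monotoneOn hpq (hmono.mono hCS), hfp, hfq]

/-- `f` restricts to an orientation-preserving `C¹` diffeomorphism of `[a, b]` with derivative
`f'`, one-sided at the endpoints. The derivative is part of the data so that the chain rule gives
explicit formulas for the derivatives of compositions and iterates. -/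
structure IsIccDiffeo (f f' : ℝ → ℝ) (a b : ℝ) : Prop where
  map_left : f a = a
  map_right : f b = b
  hasDerivWithinAt : ∀ x ∈ Icc a b, HasDerivWithinAt f (f' x) (Icc a b) x
  continuousOn_deriv : ContinuousOn f' (Icc a b)
  deriv_pos : ∀ x ∈ Icc a b, 0 < f' x

namespace IsIccDiffeo

variable {f f' g g' : ℝ → ℝ} {a b x : ℝ}

theorem of_contDiffOn (hab : a < b) (hf : ContDiffOn ℝ 1 f (Icc a b))
    (hpos : ∀ x ∈ Icc a b, 0 < derivWithin f (Icc a b) x) (ha : f a = a) (hb : f b = b) :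
    IsIccDiffeo f (derivWithin f (Icc a b)) a b where
  map_left := ha
  map_right := hb
  hasDerivWithinAt x hx := (hf.differentiableOn one_ne_zero x hx).hasDerivWithinAt
  continuousOn_deriv := hf.continuousOn_derivWithin (uniqueDiffOn_Icc hab) le_rfl
  deriv_pos := hpos

theorem continuousOn (hf : IsIccDiffeo f f' a b) : ContinuousOn f (Icc a b) :=
  fun x hx ↦ (hf.hasDerivWithinAt x hx).continuousWithinAt

theorem strictMonoOn (hf : IsIccDiffeo f f' a b) : StrictMonoOn f (Icc a b) :=
  strictMonoOn_of_hasDerivWithinAt_pos (convex_Icc a b) hf.continuousOn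
    (fun x hx ↦ (hf.hasDerivWithinAt x (interior_subset hx)).mono interior_subset)
    fun x hx ↦ hf.deriv_pos x (interior_subset hx)

theorem mapsTo (hf : IsIccDiffeo f f' a b) : MapsTo f (Icc a b) (Icc a b) :=
  mapsTo_iff_image_subset.2 <| by
    simpa only [hf.map_left, hf.map_right] using hf.strictMonoOn.monotoneOn.image_Icc_subset

theorem surjOn (hf : IsIccDiffeo f f' a b) : SurjOn f (Icc a b) (Icc a b) := by
  rcases lt_or_ge b a with hab | hab
  · simp [Icc_eq_empty_of_lt hab]
  · simpa only [SurjOn, hf.map_left, hf.map_right] using intermediate_value_Icc hab hf.continuousOn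

theorem uIcc_map_subset (hf : IsIccDiffeo f f' a b) (hx : x ∈ Icc a b) :
    uIcc x (f x) ⊆ Icc a b :=
  ordConnected_Icc.uIcc_subset hx (hf.mapsTo hx)

theorem isCompact_fixedPoints (hf : IsIccDiffeo f f' a b) :
    IsCompact (Icc a b ∩ fixedPoints f) := by
  have hclosed : IsClosed (Icc a b ∩ (fun x ↦ f x - x) ⁻¹' {0}) :=
    (hf.continuousOn.sub continuousOn_id).preimage_isClosed_of_isClosed isClosed_Icc
      isClosed_singleton
  have heq : Icc a b ∩ fixedPoints f = Icc a b ∩ (fun x ↦ f x - x) ⁻¹' {0} := by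
    ext x
    simp [IsFixedPt, sub_eq_zero]
  exact isCompact_Icc.of_isClosed_subset (heq ▸ hclosed) inter_subset_left

protected theorem id (a b : ℝ) : IsIccDiffeo id (fun _ ↦ 1) a b where
  map_left := rfl
  map_right := rfl
  hasDerivWithinAt x _ := hasDerivWithinAt_id x _
  continuousOn_deriv := continuousOn_const
  deriv_pos _ _ := one_pos

protected theorem comp (hf : IsIccDiffeo f f' a b) (hg : IsIccDiffeo g g' a b) :
    IsIccDiffeo (f ∘ g) (fun x ↦ f' (g x) * g' x) a b where
  map_left := by rw [comp_apply, hg.map_left, hf.map_left]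
  map_right := by rw [comp_apply, hg.map_right, hf.map_right]
  hasDerivWithinAt x hx :=
    (hf.hasDerivWithinAt (g x) (hg.mapsTo hx)).comp x (hg.hasDerivWithinAt x hx) hg.mapsTo
  continuousOn_deriv :=
    (hf.continuousOn_deriv.comp hg.continuousOn hg.mapsTo).mul hg.continuousOn_deriv
  deriv_pos x hx := mul_pos (hf.deriv_pos (g x) (hg.mapsTo hx)) (hg.deriv_pos x hx)

protected theorem iterate (hf : IsIccDiffeo f f' a b) (n : ℕ) :
    IsIccDiffeo f^[n] (fun x ↦ ∏ i ∈ Finset.range n, f' (f^[i] x)) a b := by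
  induction n with
  | zero => simpa using IsIccDiffeo.id a b
  | succ n ih =>
    simpa only [iterate_succ', Finset.prod_range_succ_comm] using hf.comp ih

theorem deriv_mul_deriv_comm (hab : a < b) (hf : IsIccDiffeo f f' a b)
    (hg : IsIccDiffeo g g' a b) (hcomm : EqOn (f ∘ g) (g ∘ f) (Icc a b)) (hx : x ∈ Icc a b) :
    f' (g x) * g' x = g' (f x) * f' x :=
  (uniqueDiffOn_Icc hab x hx).eq_deriv _ ((hf.comp hg).hasDerivWithinAt x hx)
    (((hg.comp hf).hasDerivWithinAt x hx).congr hcomm (hcomm hx))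

theorem prod_deriv_iterate_le (hg : IsIccDiffeo g g' a b)
    (hvar : BoundedVariationOn (fun t ↦ Real.log (g' t)) (Icc a b)) (hx : x ∈ Icc a b) {y z : ℝ}
    (hy : y ∈ uIcc x (g x)) (hz : z ∈ uIcc x (g x)) (n : ℕ) :
    ∏ i ∈ Finset.range n, g' (g^[i] y) ≤
      Real.exp (eVariationOn (fun t ↦ Real.log (g' t)) (Icc a b)).toReal *
        ∏ i ∈ Finset.range n, g' (g^[i] z) := by
  have hprod {w : ℝ} (hw : w ∈ uIcc x (g x)) : ∏ i ∈ Finset.range n, g' (g^[i] w) =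
      Real.exp (∑ i ∈ Finset.range n, Real.log (g' (g^[i] w))) := by
    rw [Real.exp_sum]
    exact Finset.prod_congr rfl fun i _ ↦ (Real.exp_log (hg.deriv_pos _
      (hg.mapsTo.iterate i (hg.uIcc_map_subset hx hw)))).symm
  rw [hprod hy, hprod hz, ← Real.exp_add]
  exact Real.exp_le_exp.2
    (sum_iterate_le_add_eVariationOn hvar hg.strictMonoOn.monotoneOn hg.mapsTo hx hy hz n)

theorem exists_tendsto_iterate_deriv_eq_one (hf : IsIccDiffeo f f' a b)
    (hg : IsIccDiffeo g g' a b) (hcomm : EqOn (f ∘ g) (g ∘ f) (Icc a b)) (hx : x ∈ Icc a b)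
    (hfx : IsFixedPt f x) (hgx : ¬ IsFixedPt g x) :
    ∃ p ∈ Icc a b, f' p = 1 ∧ ∀ y ∈ uIcc x (g x), Tendsto (g^[·] y) atTop (𝓝 p) := by
  obtain ⟨p, hpI, hgp, hlim⟩ := exists_isFixedPt_tendsto_iterate isCompact_Icc
    hg.strictMonoOn.monotoneOn hg.continuousOn hg.mapsTo hx
  have hfix (n : ℕ) : g^[n] x ∈ Icc a b ∩ fixedPoints f :=
    ⟨hg.mapsTo.iterate n hx,
      isFixedPt_map_of_eqOn_comp (eqOn_comp_iterate hg.mapsTo hcomm n) hx hfx⟩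
  have hne (n : ℕ) : g^[n] x ≠ p := fun h ↦ hgx <| by
    rw [← (hgp.iterate n).eq] at h
    rwa [(hg.iterate n).strictMonoOn.injOn hx hpI h]
  have hfp : p ∈ Icc a b ∩ fixedPoints f :=
    hf.isCompact_fixedPoints.isClosed.mem_of_tendsto hlim (.of_forall hfix)
  have hacc : AccPt p (𝓟 (Icc a b ∩ fixedPoints f)) := accPt_iff_frequently.2 <|
    hlim.frequently (Frequently.of_forall fun n ↦ ⟨hne n, hfix n⟩)
  refine ⟨p, hpI, eq_one_of_hasDerivWithinAt_of_accPt_fixedPoints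
    (hf.hasDerivWithinAt p hpI) hfp.2 hacc, fun y hy ↦ ?_⟩
  have hgap : Tendsto (fun n ↦ |g^[n + 1] x - g^[n] x|) atTop (𝓝 0) := by
    simpa using ((hlim.comp (tendsto_add_atTop_nat 1)).sub hlim).abs
  have hdiff : Tendsto (fun n ↦ g^[n] y - g^[n] x) atTop (𝓝 0) :=
    squeeze_zero_norm (fun n ↦ abs_sub_left_of_mem_uIcc
    (iterate_mem_uIcc_of_monotoneOn hg.strictMonoOn.monotoneOn hg.mapsTo hx hy n)) hgap
  simpa using hdiff.add hlim

theorem deriv_le_exp_eVariationOn (hf : IsIccDiffeo f f' a b) (hg : IsIccDiffeo g g' a b)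
    (hvar : BoundedVariationOn (fun t ↦ Real.log (g' t)) (Icc a b))
    (hcomm : EqOn (f ∘ g) (g ∘ f) (Icc a b)) (hx : x ∈ Icc a b) (hfx : IsFixedPt f x)
    (hgx : ¬ IsFixedPt g x) {y : ℝ} (hy : y ∈ uIcc x (g x)) :
    f' y ≤ Real.exp (eVariationOn (fun t ↦ Real.log (g' t)) (Icc a b)).toReal := by
  set V := (eVariationOn (fun t ↦ Real.log (g' t)) (Icc a b)).toReal
  have hab : a < b := (hx.1.trans hx.2).lt_of_ne fun h ↦ hgx <| by
    subst h
    exact subsingleton_Icc_of_ge le_rfl (hg.mapsTo hx) hx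
  have hyI : y ∈ Icc a b := hg.uIcc_map_subset hx hy
  have hfy : f y ∈ uIcc x (g x) :=
    mapsTo_uIcc_of_isFixedPt (hf.strictMonoOn.monotoneOn.mono (hg.uIcc_map_subset hx)) hfx
      (isFixedPt_map_of_eqOn_comp hcomm hx hfx) hy
  have hbound (n : ℕ) : f' y ≤ Real.exp V * f' (g^[n] y) := by
    refine le_of_mul_le_mul_left ?_ ((hg.iterate n).deriv_pos (f y) (hf.mapsTo hyI))
    have hpos := hf.deriv_pos (g^[n] y) (hg.mapsTo.iterate n hyI)
    calc
      _ = f' (g^[n] y) * ∏ i ∈ Finset.range n, g' (g^[i] y) :=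
        (deriv_mul_deriv_comm hab hf (hg.iterate n) (eqOn_comp_iterate hg.mapsTo hcomm n) hyI).symm
      _ ≤ f' (g^[n] y) * (Real.exp V * ∏ i ∈ Finset.range n, g' (g^[i] (f y))) := by
        gcongr
        exact hg.prod_deriv_iterate_le hvar hx hy hfy n
      _ = _ := by ring
  obtain ⟨p, hpI, hfp, hlim⟩ := exists_tendsto_iterate_deriv_eq_one hf hg hcomm hx hfx hgx
  have hderiv : Tendsto (fun n ↦ f' (g^[n] y)) atTop (𝓝 (f' p)) :=
    (hf.continuousOn_deriv p hpI).tendsto.comp <| tendsto_nhdsWithin_iff.2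
      ⟨hlim y hy, .of_forall fun n ↦ hg.mapsTo.iterate n hyI⟩
  simpa only [hfp, mul_one] using ge_of_tendsto' (hderiv.const_mul (Real.exp V)) hbound

theorem isFixedPt_of_mem_uIcc (hf : IsIccDiffeo f f' a b) (hg : IsIccDiffeo g g' a b)
    (hvar : BoundedVariationOn (fun t ↦ Real.log (g' t)) (Icc a b))
    (hcomm : EqOn (f ∘ g) (g ∘ f) (Icc a b)) (hx : x ∈ Icc a b) (hfx : IsFixedPt f x)
    (hgx : ¬ IsFixedPt g x) {y : ℝ} (hy : y ∈ uIcc x (g x)) : IsFixedPt f y := by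
  have hsub : uIcc x (g x) ⊆ Icc a b := hg.uIcc_map_subset hx
  refine isFixedPt_of_lipschitzOnWith_iterate
    (K := (Real.exp (eVariationOn (fun t ↦ Real.log (g' t)) (Icc a b)).toReal).toNNReal)
    (hf.strictMonoOn.monotoneOn.mono hsub) hfx
    (isFixedPt_map_of_eqOn_comp hcomm hx hfx) (fun n ↦ ?_) hy
  refine (convex_uIcc x (g x)).lipschitzOnWith_of_nnnorm_hasDerivWithin_le
    (fun z hz ↦ ((hf.iterate n).hasDerivWithinAt z (hsub hz)).mono hsub) fun z hz ↦ ?_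
  have hcommn : EqOn (f^[n] ∘ g) (g ∘ f^[n]) (Icc a b) :=
    (eqOn_comp_iterate hf.mapsTo hcomm.symm n).symm
  rw [← NNReal.coe_le_coe, coe_nnnorm, Real.coe_toNNReal _ (Real.exp_pos _).le,
    Real.norm_of_nonneg ((hf.iterate n).deriv_pos z (hsub hz)).le]
  exact deriv_le_exp_eVariationOn (hf.iterate n) hg hvar hcommn hx (hfx.iterate n) hgx hz

theorem fixedPoints_sdiff_interior_subset (hf : IsIccDiffeo f f' a b) (hg : IsIccDiffeo g g' a b)
    (hvar : BoundedVariationOn (fun t ↦ Real.log (g' t)) (Icc a b))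
    (hcomm : EqOn (f ∘ g) (g ∘ f) (Icc a b)) :
    (Icc a b ∩ fixedPoints f) \ interior (Icc a b ∩ fixedPoints f) ⊆
      Icc a b ∩ fixedPoints g := by
  rintro x ⟨⟨hx, hfx⟩, hint⟩
  refine ⟨hx, by_contra fun hgx ↦ hint (mem_interior_iff_mem_nhds.2 ?_)⟩
  obtain ⟨y, hy, rfl⟩ := hg.surjOn hx
  have hgy : ¬ IsFixedPt g y := fun h ↦ hgx (h.eq.symm ▸ h)
  have hfy : IsFixedPt f y := hg.strictMonoOn.injOn (hf.mapsTo hy) hy <| by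
    simpa only [comp_apply] using (hcomm hy).symm.trans hfx
  have hsub : uIcc y (g (g y)) ⊆ Icc a b ∩ fixedPoints f :=
    uIcc_subset_uIcc_union_uIcc.trans <| union_subset
      (fun z hz ↦ ⟨hg.uIcc_map_subset hy hz,
        isFixedPt_of_mem_uIcc hf hg hvar hcomm hy hfy hgy hz⟩)
      (fun z hz ↦ ⟨hg.uIcc_map_subset hx hz,
        isFixedPt_of_mem_uIcc hf hg hvar hcomm hx hfx hgx hz⟩)
  refine mem_of_superset ?_ hsub
  rcases lt_or_gt_of_ne hgy with h | h
  · exact uIcc_comm y _ ▸ mem_of_superset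
      (Icc_mem_nhds (hg.strictMonoOn hx hy h) h) Icc_subset_uIcc
  · exact mem_of_superset (Icc_mem_nhds h (hg.strictMonoOn hy hx h)) Icc_subset_uIcc

theorem image_connectedComponentIn_fixedPoints (hf : IsIccDiffeo f f' a b)
    (hg : IsIccDiffeo g g' a b) (hvar : BoundedVariationOn (fun t ↦ Real.log (f' t)) (Icc a b))
    (hcomm : EqOn (f ∘ g) (g ∘ f) (Icc a b)) (hx : x ∈ Icc a b ∩ fixedPoints g) :
    f '' connectedComponentIn (Icc a b ∩ fixedPoints g) x =
      connectedComponentIn (Icc a b ∩ fixedPoints g) x :=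
  image_connectedComponentIn_of_fixed_frontier hg.isCompact_fixedPoints
    (hf.strictMonoOn.monotoneOn.mono inter_subset_left) (hf.continuousOn.mono inter_subset_left)
    (fun _ hy ↦ (fixedPoints_sdiff_interior_subset hg hf hvar hcomm.symm hy).2) hx

end IsIccDiffeo

theorem commuting_diffeos_interval_general {a b : ℝ} {f f' g g' : ℝ → ℝ}
    (hf : IsIccDiffeo f f' a b) (hg : IsIccDiffeo g g' a b)
    (hfvar : BoundedVariationOn (fun t ↦ Real.log (f' t)) (Icc a b))
    (hgvar : BoundedVariationOn (fun t ↦ Real.log (g' t)) (Icc a b))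
    (hcomm : ∀ x ∈ Icc a b, f (g x) = g (f x)) :
    (∀ x ∈ Icc a b ∩ fixedPoints g, f '' connectedComponentIn (Icc a b ∩ fixedPoints g) x =
      connectedComponentIn (Icc a b ∩ fixedPoints g) x) ∧
    (∀ x ∈ Icc a b ∩ fixedPoints f, g '' connectedComponentIn (Icc a b ∩ fixedPoints f) x =
      connectedComponentIn (Icc a b ∩ fixedPoints f) x) ∧
    ((Icc a b ∩ fixedPoints f) \ interior (Icc a b ∩ fixedPoints f) ⊆ Icc a b ∩ fixedPoints g) ∧
    ((Icc a b ∩ fixedPoints g) \ interior (Icc a b ∩ fixedPoints g) ⊆ Icc a b ∩ fixedPoints f) ∧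
    (interior (Icc a b ∩ fixedPoints f) = ∅ → interior (Icc a b ∩ fixedPoints g) = ∅ →
      Icc a b ∩ fixedPoints f = Icc a b ∩ fixedPoints g) := by
  have hcomm : EqOn (f ∘ g) (g ∘ f) (Icc a b) := hcomm
  have hfg := hf.fixedPoints_sdiff_interior_subset hg hgvar hcomm
  have hgf := hg.fixedPoints_sdiff_interior_subset hf hfvar hcomm.symm
  refine ⟨fun x ↦ hf.image_connectedComponentIn_fixedPoints hg hfvar hcomm,
    fun x ↦ hg.image_connectedComponentIn_fixedPoints hf hgvar hcomm.symm,
    hfg, hgf, fun hfint hgint ↦ ?_⟩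
  rw [hfint, sdiff_empty] at hfg
  rw [hgint, sdiff_empty] at hgf
  exact hfg.antisymm hgf

end

/-- **Commuting diffeomorphisms on `I`.** If `f` and `g` are commuting
orientation-preserving C² diffeomorphisms of `I = [0,1]`, then `f` maps every connected
component of `Fix(g)` onto itself and vice versa, the frontier
`∂Fix(f) = Fix(f) \ Int(Fix(f))` is contained in `Fix(g)` and vice versa; in particular
if both fixed point sets have empty interior then they are equal. -/
theorem commuting_diffeos_interval (f g : ℝ → ℝ)
    (hfbij : Set.BijOn f (Set.Icc 0 1) (Set.Icc 0 1))
    (hgbij : Set.BijOn g (Set.Icc 0 1) (Set.Icc 0 1))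
    (hf0 : f 0 = 0) (hf1 : f 1 = 1) (hg0 : g 0 = 0) (hg1 : g 1 = 1)
    (hf2 : ContDiffOn ℝ 2 f (Set.Icc 0 1))
    (hg2 : ContDiffOn ℝ 2 g (Set.Icc 0 1))
    (hf' : ∀ x ∈ Set.Icc (0 : ℝ) 1, 0 < derivWithin f (Set.Icc 0 1) x)
    (hg' : ∀ x ∈ Set.Icc (0 : ℝ) 1, 0 < derivWithin g (Set.Icc 0 1) x)
    (hcomm : ∀ x ∈ Set.Icc (0 : ℝ) 1, f (g x) = g (f x)) :
    (∀ x ∈ fixedIn g, f '' connectedComponentIn (fixedIn g) x =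
      connectedComponentIn (fixedIn g) x) ∧
    (∀ x ∈ fixedIn f, g '' connectedComponentIn (fixedIn f) x =
      connectedComponentIn (fixedIn f) x) ∧
    (fixedIn f \ interior (fixedIn f) ⊆ fixedIn g) ∧
    (fixedIn g \ interior (fixedIn g) ⊆ fixedIn f) ∧
    (interior (fixedIn f) = ∅ → interior (fixedIn g) = ∅ → fixedIn f = fixedIn g) := by
  exact commuting_diffeos_interval_general
    (.of_contDiffOn zero_lt_one (hf2.of_le one_le_two) hf' hf0 hf1)
    (.of_contDiffOn zero_lt_one (hg2.of_le one_le_two) hg' hg0 hg1)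
    (boundedVariationOn_log_derivWithin zero_lt_one hf2 hf')
    (boundedVariationOn_log_derivWithin zero_lt_one hg2 hg') hcomm
end

section
/- Abelian criterion for the interval: Let g₁, g₂, …, g_k be orientation-preserving C² diffeomorphisms of I = [0,1], each of which is fully supported, i.e., Fix(g_i) has empty interior. Suppose the commutativity graph of {g₁, …, g_k} is connected: the graph with vertex set {1,…,k} and an edge between i and j whenever g_i ∘ g_j = g_j ∘ g_i is connected. Then the subgroup of Diff²₊(I) generated by g₁, …, g_k is abelian. -/
/-- A permutation of `ℝ` representing an orientation-preserving C² diffeomorphism of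
`I = [0,1]`: it is the identity off `[0,1]`, is C² on `[0,1]`, and has positive
(one-sided, at the endpoints) derivative on `[0,1]`. -/
def IsDiffI (f : Equiv.Perm ℝ) : Prop :=
  (∀ x, x ∉ Set.Icc (0 : ℝ) 1 → f x = x) ∧
  ContDiffOn ℝ 2 f (Set.Icc 0 1) ∧
  ∀ x ∈ Set.Icc (0 : ℝ) 1, 0 < derivWithin f (Set.Icc 0 1) x

/-!
Let `f` be a C² diffeomorphism and `(a, b)` a component of the complement of its fixed points. Since
`log f'` is Lipschitz and the orbits of two points of `(a, b)` interlace, the iterates of `f` have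
bounded distortion, so the ratios `(f^[n] x - f^[n] y) / (f^[n] p - f^[n] q)` stay bounded and a
limit of them is an injective coordinate on `(a, b)`. A C¹ map fixing `a` and `b` and commuting with
`f` is affine in this coordinate, because it is infinitesimally linear at the endpoint to which the
orbits converge. Kopell's lemma follows: if such a map has a fixed point in `(a, b)`, then it fixes
the whole orbit of that point, hence is the identity there. Under full support, commuting maps
therefore have the same fixed points, and affine maps commuting with a common nontrivial affine map
commute, so commutation is transitive and connectedness makes all generators commute.
-/

open Set Filter Topology Asymptotics
open Function hiding Commute

section FixedPointGap

variable {α : Type*} [LinearOrder α] {f : α → α} {a b x : α}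

/-- `(a, b)` is a bounded connected component of the complement of the fixed-point set of `f`. -/
structure IsFixedPointGap (f : α → α) (a b : α) : Prop where
  lt : a < b
  left : IsFixedPt f a
  right : IsFixedPt f b
  ne : ∀ x ∈ Ioo a b, f x ≠ x

namespace IsFixedPointGap

theorem dual (h : IsFixedPointGap f a b) : IsFixedPointGap (α := αᵒᵈ) f b a :=
  ⟨h.lt, h.right, h.left, fun x hx => h.ne x hx.symm⟩

theorem le_left_of_isFixedPt (h : IsFixedPointGap f a b) (hx : IsFixedPt f x) (hxb : x < b) :
    x ≤ a :=
  not_lt.1 fun hax => h.ne x ⟨hax, hxb⟩ hx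

theorem mapsTo (h : IsFixedPointGap f a b) (hf : StrictMono f) :
    MapsTo f (Ioo a b) (Ioo a b) := by
  simpa only [h.left.eq, h.right.eq] using hf.mapsTo_Ioo (a := a) (b := b)

theorem isFixedPt_left_of_commute (h : IsFixedPointGap f a b) (g : α ≃o α)
    (hc : Function.Commute f g) (hx : x ∈ Ioo a b) (hgx : IsFixedPt g x) : IsFixedPt g a := by
  have hsymm : Function.Commute f g.symm := hc.inverses_right g.right_inv g.left_inv
  have hle : ∀ e : α ≃o α, Function.Commute f e → IsFixedPt e x → e a ≤ a := fun e he hex =>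
    h.le_left_of_isFixedPt (h.left.map he.symm) <|
      ((e.strictMono hx.1).trans_eq hex).trans hx.2
  exact (hle g hc hgx).antisymm <|
    g.symm_apply_le.1 <| hle g.symm hsymm (g.symm_apply_eq.2 hgx.eq.symm)

theorem isFixedPt_right_of_commute (h : IsFixedPointGap f a b) (g : α ≃o α)
    (hc : Function.Commute f g) (hx : x ∈ Ioo a b) (hgx : IsFixedPt g x) : IsFixedPt g b :=
  h.dual.isFixedPt_left_of_commute g.dual hc hx.symm hgx

end IsFixedPointGap

variable [TopologicalSpace α]

theorem exists_isFixedPointGap [OrderTopology α] [CompactIccSpace α] (hf : Continuous f)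
    (ha : IsFixedPt f a) (hb : IsFixedPt f b) (hx : x ∈ Icc a b) (hfx : f x ≠ x) :
    ∃ c d, IsFixedPointGap f c d ∧ x ∈ Ioo c d := by
  have hcl : IsClosed (fixedPoints f) := isClosed_fixedPoints hf
  obtain ⟨c, ⟨hc, hcI⟩, hmax⟩ :=
    (isCompact_Icc.inter_left hcl).exists_isGreatest ⟨a, ha, left_mem_Icc.2 hx.1⟩
  obtain ⟨d, ⟨hd, hdI⟩, hmin⟩ :=
    (isCompact_Icc.inter_left hcl).exists_isLeast ⟨b, hb, right_mem_Icc.2 hx.2⟩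
  have hcx : c < x := hcI.2.lt_of_ne (by rintro rfl; exact hfx hc)
  have hxd : x < d := hdI.1.lt_of_ne (by rintro rfl; exact hfx hd)
  refine ⟨c, d, ⟨hcx.trans hxd, hc, hd, fun y hy hfy => ?_⟩, hcx, hxd⟩
  rcases le_total y x with hyx | hxy
  · exact hy.1.not_ge (hmax ⟨hfy, hcI.1.trans hy.1.le, hyx⟩)
  · exact hy.2.not_ge (hmin ⟨hfy, hxy, hy.2.le.trans hdI.2⟩)

namespace IsFixedPointGap

theorem Icc_subset_of_isClosed [OrderTopology α] [DenselyOrdered α] {s : Set α}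
    (h : IsFixedPointGap f a b) (hs : IsClosed s) (hfs : ∀ x ∉ s, f x = x) : Icc a b ⊆ s := by
  rw [← closure_Ioo h.lt.ne]
  exact closure_minimal (fun x hx => not_imp_comm.1 (hfs x) (h.ne x hx)) hs

end IsFixedPointGap

end FixedPointGap

section FixedPointGap

variable {α : Type*} [ConditionallyCompleteLinearOrder α] [TopologicalSpace α] [OrderTopology α]
  {f : α → α} {a b x : α}

namespace IsFixedPointGap

theorem map_lt_or_lt_map [DenselyOrdered α] (h : IsFixedPointGap f a b) (hf : Continuous f) :
    (∀ x ∈ Ioo a b, f x < x) ∨ ∀ x ∈ Ioo a b, x < f x := by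
  by_contra! ⟨⟨x, hx, hfx⟩, y, hy, hfy⟩
  obtain ⟨z, hz, hfz⟩ := isPreconnected_Ioo.intermediate_value₂ hy hx hf.continuousOn
    continuousOn_id hfy hfx
  exact h.ne z hz hfz

theorem tendsto_iterate_left (h : IsFixedPointGap f a b) (hmono : Monotone f) (hf : Continuous f)
    (hx : x ∈ Ioo a b) (hlt : f x < x) : Tendsto (fun n => f^[n] x) atTop (𝓝 a) := by
  have hge : ∀ n, a ≤ f^[n] x := fun n =>
    (h.left.iterate n).eq.symm.trans_le (hmono.iterate n hx.1.le)
  have hanti : Antitone fun n => f^[n] x := hmono.antitone_iterate_of_map_le hlt.le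
  have hlim := tendsto_atTop_ciInf hanti ⟨a, forall_mem_range.2 hge⟩
  have hle : ⨅ n, f^[n] x ≤ a := h.le_left_of_isFixedPt
    (isFixedPt_of_tendsto_iterate hlim hf.continuousAt) ((hanti.le_of_tendsto hlim 0).trans_lt hx.2)
  rwa [hle.antisymm (le_ciInf hge)] at hlim

theorem tendsto_iterate_right (h : IsFixedPointGap f a b) (hmono : Monotone f) (hf : Continuous f)
    (hx : x ∈ Ioo a b) (hlt : x < f x) : Tendsto (fun n => f^[n] x) atTop (𝓝 b) :=
  h.dual.tendsto_iterate_left hmono.dual hf hx.symm hlt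

theorem exists_tendsto_iterate [DenselyOrdered α] (h : IsFixedPointGap f a b) (hmono : Monotone f)
    (hf : Continuous f) :
    ∃ e, (e = a ∨ e = b) ∧ ∀ x ∈ Ioo a b, Tendsto (fun n => f^[n] x) atTop (𝓝 e) := by
  rcases h.map_lt_or_lt_map hf with hlt | hlt
  · exact ⟨a, .inl rfl, fun x hx => h.tendsto_iterate_left hmono hf hx (hlt x hx)⟩
  · exact ⟨b, .inr rfl, fun x hx => h.tendsto_iterate_right hmono hf hx (hlt x hx)⟩

end IsFixedPointGap

end FixedPointGap

theorem sum_range_shift_sub {M : Type*} [AddCommGroup M] (s : ℕ → M) (m n : ℕ) :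
    ∑ i ∈ Finset.range n, (s (i + m) - s i) = ∑ i ∈ Finset.range m, (s (i + n) - s i) := by
  have h := Finset.sum_range_add s m n
  rw [add_comm m n, Finset.sum_range_add] at h
  simp only [Finset.sum_sub_distrib, sub_eq_sub_iff_add_eq_add, add_comm _ m, add_comm _ n]
  rw [add_comm, ← h, add_comm]

theorem abs_sum_range_shift_sub_le {s : ℕ → ℝ} {a b : ℝ} (hs : ∀ n, s n ∈ Icc a b) (m n : ℕ) :
    |∑ i ∈ Finset.range n, (s (i + m) - s i)| ≤ m * (b - a) := by
  rw [sum_range_shift_sub]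
  calc |∑ i ∈ Finset.range m, (s (i + n) - s i)|
      ≤ ∑ i ∈ Finset.range m, |s (i + n) - s i| := Finset.abs_sum_le_sum_abs _ _
    _ ≤ ∑ _i ∈ Finset.range m, (b - a) :=
        Finset.sum_le_sum fun i _ => abs_sub_le_of_le_of_le (hs _).1 (hs _).2 (hs _).1 (hs _).2
    _ = m * (b - a) := by rw [Finset.sum_const, Finset.card_range, nsmul_eq_mul]

theorem IsFixedPointGap.exists_sum_iterate_sub_le {f : ℝ → ℝ} {a b u v : ℝ}
    (h : IsFixedPointGap f a b) (hmono : StrictMono f) (hf : Continuous f)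
    (hu : u ∈ Ioo a b) (hv : v ∈ Ioo a b) :
    ∃ C, ∀ n, ∑ i ∈ Finset.range n, (f^[i] v - f^[i] u) ≤ C := by
  have hmem : ∀ x ∈ Ioo a b, ∀ n, f^[n] x ∈ Icc a b := fun x hx n =>
    Ioo_subset_Icc_self ((h.mapsTo hmono).iterate n hx)
  -- The orbits of `u` and `v` interlace after a shift by `N`, so the sum is nearly telescoping.
  obtain ⟨e, rfl | rfl, hlim⟩ := h.exists_tendsto_iterate hmono.monotone hf
  · obtain ⟨N, hN⟩ := ((hlim v hv).eventually_lt_const hu.1).exists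
    have hpush : ∀ i, f^[i + N] v ≤ f^[i] u := fun i =>
      iterate_add_apply f i N v ▸ hmono.monotone.iterate i hN.le
    refine ⟨N * (b - e), fun n => ?_⟩
    calc ∑ i ∈ Finset.range n, (f^[i] v - f^[i] u)
        ≤ ∑ i ∈ Finset.range n, -(f^[i + N] v - f^[i] v) :=
          Finset.sum_le_sum fun i _ => by linarith [hpush i]
      _ = -∑ i ∈ Finset.range n, (f^[i + N] v - f^[i] v) := Finset.sum_neg_distrib _
      _ ≤ N * (b - e) := (neg_le_abs _).trans (abs_sum_range_shift_sub_le (hmem v hv) N n)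
  · obtain ⟨N, hN⟩ := ((hlim u hu).eventually_const_lt hv.2).exists
    have hpush : ∀ i, f^[i] v ≤ f^[i + N] u := fun i =>
      iterate_add_apply f i N u ▸ hmono.monotone.iterate i hN.le
    refine ⟨N * (e - a), fun n => ?_⟩
    calc ∑ i ∈ Finset.range n, (f^[i] v - f^[i] u)
        ≤ ∑ i ∈ Finset.range n, (f^[i + N] u - f^[i] u) :=
          Finset.sum_le_sum fun i _ => by linarith [hpush i]
      _ ≤ N * (e - a) := (le_abs_self _).trans (abs_sum_range_shift_sub_le (hmem u hu) N n)

section Affine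

variable {α 𝕜 : Type*} [Field 𝕜] {D : Set α} {W : α → 𝕜} {f g h : α → α} {x y : α}

/-- `g` preserves `D` and reads there as an affine map of the coordinate `W`, which is meant to be
injective on `D` but need not be onto or continuous. -/
def IsAffineInCoordinate (W : α → 𝕜) (D : Set α) (g : α → α) : Prop :=
  MapsTo g D D ∧ ∃ μ d, ∀ x ∈ D, W (g x) = μ * W x + d

namespace IsAffineInCoordinate

theorem eqOn_id_of_isFixedPt (hg : IsAffineInCoordinate W D g) (hW : InjOn W D)
    (hx : x ∈ D) (hy : y ∈ D) (hxy : x ≠ y) (hgx : IsFixedPt g x) (hgy : IsFixedPt g y) :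
    EqOn g id D := by
  obtain ⟨hgD, μ, d, hμ⟩ := hg
  have ex : W x = μ * W x + d := by simpa only [hgx.eq] using hμ x hx
  have ey : W y = μ * W y + d := by simpa only [hgy.eq] using hμ y hy
  have hmul : (μ - 1) * (W x - W y) = 0 := by linear_combination ey - ex
  obtain rfl : μ = 1 := sub_eq_zero.1 <|
    (mul_eq_zero.1 hmul).resolve_right (sub_ne_zero.2 (hW.ne hx hy hxy))
  intro z hz
  apply hW (hgD hz) hz
  linear_combination hμ z hz - ex

theorem comm_of_comm (hf : IsAffineInCoordinate W D f) (hg : IsAffineInCoordinate W D g)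
    (hh : IsAffineInCoordinate W D h) (hW : InjOn W D) (hfg : Function.Commute f g)
    (hfh : Function.Commute f h) (hx : x ∈ D) (hfx : f x ≠ x) (hy : y ∈ D) :
    g (h y) = h (g y) := by
  obtain ⟨hfD, l, c, hl⟩ := hf
  obtain ⟨hgD, μ, d, hμ⟩ := hg
  obtain ⟨hhD, ν, e, hν⟩ := hh
  have hfg' : (l - 1) * d = (μ - 1) * c := by
    have := congrArg W (hfg.eq x)
    rw [hl _ (hgD hx), hμ _ hx, hμ _ (hfD hx), hl _ hx] at this
    linear_combination this
  have hfh' : (l - 1) * e = (ν - 1) * c := by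
    have := congrArg W (hfh.eq x)
    rw [hl _ (hhD hx), hν _ hx, hν _ (hfD hx), hl _ hx] at this
    linear_combination this
  have hmove : (l - 1) * W x + c ≠ 0 := fun h0 => hfx <| hW (hfD hx) hx <| by
    linear_combination hl x hx + h0
  have hdet : (μ - 1) * e = (ν - 1) * d := by
    refine mul_left_cancel₀ hmove ?_
    linear_combination (W x * (μ - 1) + d) * hfh' - (W x * (ν - 1) + e) * hfg'
  apply hW (hgD (hhD hy)) (hhD (hgD hy))
  rw [hμ _ (hhD hy), hν _ hy, hν _ (hgD hy), hμ _ hy]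
  linear_combination hdet

end IsAffineInCoordinate

end Affine

section LimitCoordinate

theorem exists_tendsto_of_isBoundedUnder_norm {ι E : Type*} [NormedAddCommGroup E] [ProperSpace E]
    (U : Ultrafilter ι) {u : ι → E} (hu : IsBoundedUnder (· ≤ ·) U (‖u ·‖)) :
    ∃ w, Tendsto u U (𝓝 w) := by
  obtain ⟨C, hC⟩ := hu
  obtain ⟨w, -, hw⟩ := (isCompact_closedBall (0 : E) C).ultrafilter_le_nhds' (U.map u)
    ((eventually_map.1 hC).mono fun n hn => mem_closedBall_zero_iff.2 hn)
  exact ⟨w, hw⟩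

variable {𝕜 : Type*} [NontriviallyNormedField 𝕜] {f g : 𝕜 → 𝕜} {D : Set 𝕜} {e μ : 𝕜}

/-- Any two pairs of distinct points of `D` have orbits under `f` whose separations are comparable
up to constants: the conclusion of the bounded distortion argument, in the form used to pass to
limits of their ratios. -/
def IterateIncrementsComparableOn (f : 𝕜 → 𝕜) (D : Set 𝕜) : Prop :=
  ∀ ⦃x⦄, x ∈ D → ∀ ⦃y⦄, y ∈ D → ∀ ⦃p⦄, p ∈ D → ∀ ⦃q⦄, q ∈ D → p ≠ q →
    (fun n => f^[n] x - f^[n] y) =O[atTop] fun n => f^[n] p - f^[n] q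

/-- `W` is, up to a constant, the limit of the iterates of `f` normalised by the separation of the
orbits of `p` and `q`. The limit is taken along an ultrafilter, so that boundedness suffices for its
existence. -/
def IsLimitCoordinate (f : 𝕜 → 𝕜) (D : Set 𝕜) (U : Ultrafilter ℕ) (W : 𝕜 → 𝕜) (p q : 𝕜) : Prop :=
  ∀ x ∈ D, ∀ y ∈ D,
    Tendsto (fun n => (f^[n] x - f^[n] y) / (f^[n] p - f^[n] q)) U (𝓝 (W x - W y))

variable {U : Ultrafilter ℕ} {W : 𝕜 → 𝕜} {p q : 𝕜}

theorem IterateIncrementsComparableOn.exists_isLimitCoordinate [ProperSpace 𝕜]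
    (hcomp : IterateIncrementsComparableOn f D) (hU : ↑U ≤ (atTop : Filter ℕ))
    (hp : p ∈ D) (hq : q ∈ D) (hpq : p ≠ q) : ∃ W, IsLimitCoordinate f D U W p q := by
  have hlim : ∀ x ∈ D, ∃ w,
      Tendsto (fun n => (f^[n] x - f^[n] q) / (f^[n] p - f^[n] q)) U (𝓝 w) := fun x hx =>
    exists_tendsto_of_isBoundedUnder_norm U <|
      div_isBoundedUnder_of_isBigO ((hcomp hx hq hp hq hpq).mono hU)
  choose! W hW using hlim
  refine ⟨W, fun x hx y hy => ((hW x hx).sub (hW y hy)).congr fun n => ?_⟩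
  rw [← sub_div, sub_sub_sub_cancel_right]

theorem IsLimitCoordinate.injOn (hW : IsLimitCoordinate f D U W p q) (hf : Injective f)
    (hcomp : IterateIncrementsComparableOn f D) (hU : ↑U ≤ (atTop : Filter ℕ))
    (hp : p ∈ D) (hq : q ∈ D) (hpq : p ≠ q) : InjOn W D := by
  intro x hx y hy hxy
  by_contra hne
  have hpq' : ∀ n, f^[n] p - f^[n] q ≠ 0 := fun n => sub_ne_zero.2 ((hf.iterate n).ne hpq)
  have hlo : (fun n => f^[n] x - f^[n] y) =o[U] fun n => f^[n] p - f^[n] q :=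
    (isLittleO_iff_tendsto fun n hn => absurd hn (hpq' n)).2 <| by
      simpa only [hxy, sub_self] using hW x hx y hy
  exact ((hcomp hp hq hx hy hne).mono hU).not_isLittleO (Eventually.of_forall hpq').frequently hlo

theorem IsLimitCoordinate.isAffineInCoordinate (hW : IsLimitCoordinate f D U W p q)
    (hcomp : IterateIncrementsComparableOn f D) (hU : ↑U ≤ (atTop : Filter ℕ))
    (hp : p ∈ D) (hq : q ∈ D) (hpq : p ≠ q) (hfD : MapsTo f D D)
    (hlim : ∀ x ∈ D, Tendsto (fun n => f^[n] x) atTop (𝓝 e)) (hgD : MapsTo g D D)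
    (hfg : Function.Commute f g) (hg : HasDerivAtFilter g μ (𝓝[D] e ×ˢ 𝓝[D] e)) :
    IsAffineInCoordinate W D g := by
  refine ⟨hgD, μ, W (g q) - μ * W q, fun x hx => ?_⟩
  have horbit : ∀ y ∈ D, Tendsto (fun n => f^[n] y) atTop (𝓝[D] e) := fun y hy =>
    tendsto_nhdsWithin_iff.2 ⟨hlim y hy, Eventually.of_forall fun n => hfD.iterate n hy⟩
  have hlo := (((hasDerivAtFilter_iff_isLittleO.1 hg).comp_tendsto
    ((horbit x hx).prodMk (horbit q hq))).trans_isBigO (hcomp hx hq hp hq hpq)).mono hU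
  have hzero : W (g x) - W (g q) - μ * (W x - W q) = 0 :=
    tendsto_nhds_unique (((hW _ (hgD hx) _ (hgD hq)).sub ((hW x hx q hq).const_mul μ)).congr
      fun n => ?_) hlo.tendsto_div_nhds_zero
  · linear_combination hzero
  · simp only [comp_apply, smul_eq_mul, (hfg.iterate_left n).eq]
    ring

end LimitCoordinate

/-- Distortion control in terms of difference quotients: on each subinterval `[u, v]` with endpoints
in `s`, the slopes of `f` agree up to the factor `exp (L * (v - u))`. -/
def SlopeDistortionOn (f : ℝ → ℝ) (L : ℝ) (s : Set ℝ) : Prop :=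
  ∀ ⦃u⦄, u ∈ s → ∀ ⦃v⦄, v ∈ s → ∀ ⦃x⦄, x ∈ Icc u v → ∀ ⦃y⦄, y ∈ Icc u v → ∀ ⦃p⦄, p ∈ Icc u v →
    ∀ ⦃q⦄, q ∈ Icc u v → x ≠ y → p ≠ q → slope f x y ≤ Real.exp (L * (v - u)) * slope f p q

theorem slope_comp_eq_mul {k : Type*} [Field k] (f g : k → k) (x y : k) :
    slope (f ∘ g) x y = slope f (g x) (g y) * slope g x y := by
  rcases eq_or_ne (g x) (g y) with hg | hg
  · simp [slope_def_field, hg]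
  · simp only [slope_def_field, comp_apply, div_mul_div_cancel₀ (sub_ne_zero.2 hg.symm)]

theorem SlopeDistortionOn.iterate {f : ℝ → ℝ} {L : ℝ} {s : Set ℝ} (hf : SlopeDistortionOn f L s)
    (hmono : StrictMono f) (hs : MapsTo f s s) {u v x y p q : ℝ} (hu : u ∈ s) (hv : v ∈ s)
    (hx : x ∈ Icc u v) (hy : y ∈ Icc u v) (hp : p ∈ Icc u v) (hq : q ∈ Icc u v)
    (hxy : x ≠ y) (hpq : p ≠ q) (n : ℕ) :
    slope f^[n] x y ≤
      Real.exp (L * ∑ i ∈ Finset.range n, (f^[i] v - f^[i] u)) * slope f^[n] p q := by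
  induction n with
  | zero =>
    simp [slope_def_field, div_self (sub_ne_zero.2 hxy.symm), div_self (sub_ne_zero.2 hpq.symm)]
  | succ n ih =>
    have hmaps : MapsTo f^[n] (Icc u v) (Icc (f^[n] u) (f^[n] v)) :=
      (hmono.iterate n).monotone.mapsTo_Icc
    have hinj := (hmono.iterate n).injective
    have hpos := ((hmono.iterate n).strictMonoOn univ).slope_pos trivial trivial hxy
    have hpos' := (hmono.strictMonoOn univ).slope_pos trivial trivial (hinj.ne hpq)
    rw [iterate_succ', slope_comp_eq_mul, slope_comp_eq_mul, Finset.sum_range_succ, mul_add,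
      Real.exp_add]
    calc slope f (f^[n] x) (f^[n] y) * slope f^[n] x y
        ≤ (Real.exp (L * (f^[n] v - f^[n] u)) * slope f (f^[n] p) (f^[n] q)) *
          (Real.exp (L * ∑ i ∈ Finset.range n, (f^[i] v - f^[i] u)) * slope f^[n] p q) :=
          mul_le_mul (hf (hs.iterate n hu) (hs.iterate n hv) (hmaps hx) (hmaps hy) (hmaps hp)
            (hmaps hq) (hinj.ne hxy) (hinj.ne hpq)) ih hpos.le (by positivity)
      _ = _ := by ring

theorem exists_derivWithin_eq_slope {f : ℝ → ℝ} {s : Set ℝ} [hs : s.OrdConnected]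
    (hf : DifferentiableOn ℝ f s) {x y : ℝ} (hx : x ∈ s) (hy : y ∈ s) (hxy : x ≠ y) :
    ∃ c ∈ uIcc x y, derivWithin f s c = slope f x y := by
  wlog hlt : x < y generalizing x y
  · rw [slope_comm, uIcc_comm]
    exact this hy hx hxy.symm (hxy.lt_or_gt.resolve_left hlt)
  obtain ⟨c, hc, hcs⟩ := exists_deriv_eq_slope f hlt (hf.continuousOn.mono (hs.out hx hy))
    (hf.mono (Ioo_subset_Icc_self.trans (hs.out hx hy)))
  refine ⟨c, Icc_subset_uIcc (Ioo_subset_Icc_self hc), ?_⟩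
  rw [derivWithin_of_mem_nhds (mem_of_superset (Icc_mem_nhds hc.1 hc.2) (hs.out hx hy)), hcs,
    slope_def_field]

theorem slopeDistortionOn_of_lipschitzOnWith_log_derivWithin {f : ℝ → ℝ} {s : Set ℝ}
    {K : NNReal} [hs : s.OrdConnected] (hf : DifferentiableOn ℝ f s)
    (hpos : ∀ x ∈ s, 0 < derivWithin f s x)
    (hlip : LipschitzOnWith K (fun x => Real.log (derivWithin f s x)) s) :
    SlopeDistortionOn f K s := by
  intro u hu v hv x hx y hy p hp q hq hxy hpq
  have hsub : Icc u v ⊆ s := hs.out hu hv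
  obtain ⟨c, hc, hcs⟩ := exists_derivWithin_eq_slope hf (hsub hx) (hsub hy) hxy
  obtain ⟨d, hd, hds⟩ := exists_derivWithin_eq_slope hf (hsub hp) (hsub hq) hpq
  replace hc := uIcc_subset_Icc hx hy hc
  replace hd := uIcc_subset_Icc hp hq hd
  have hcpos := hpos c (hsub hc)
  have hdpos := hpos d (hsub hd)
  rw [← hcs, ← hds, ← Real.log_le_log_iff hcpos (by positivity),
    Real.log_mul (Real.exp_ne_zero _) hdpos.ne', Real.log_exp]
  have hdist := (le_abs_self _).trans (hlip.dist_le_mul c (hsub hc) d (hsub hd))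
  linarith [mul_le_mul_of_nonneg_left (Real.dist_le_of_mem_Icc hc hd) K.coe_nonneg]

theorem SlopeDistortionOn.mono {f : ℝ → ℝ} {L : ℝ} {s t : Set ℝ} (hf : SlopeDistortionOn f L t)
    (hst : s ⊆ t) : SlopeDistortionOn f L s :=
  fun _ hu _ hv => hf (hst hu) (hst hv)

theorem IsFixedPointGap.iterateIncrementsComparableOn {f : ℝ → ℝ} {a b L : ℝ}
    (h : IsFixedPointGap f a b) (hmono : StrictMono f) (hf : Continuous f) (hL : 0 ≤ L)
    (hdist : SlopeDistortionOn f L (Ioo a b)) : IterateIncrementsComparableOn f (Ioo a b) := by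
  intro x hx y hy p hp q hq hpq
  rcases eq_or_ne x y with rfl | hxy
  · simpa only [sub_self] using isBigO_zero _ _
  obtain ⟨u, hu, v, hv, hsub⟩ : ∃ u ∈ Ioo a b, ∃ v ∈ Ioo a b, {x, y, p, q} ⊆ Icc u v := by
    refine ⟨x ⊓ y ⊓ (p ⊓ q), ?_, x ⊔ y ⊔ (p ⊔ q), ?_, ?_⟩
    · simp [hx.1, hy.1, hp.1, hq.1, hx.2]
    · simp [hx.1, hx.2, hy.2, hp.2, hq.2]
    · rintro z (rfl | rfl | rfl | rfl) <;> simp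
  obtain ⟨C, hC⟩ := h.exists_sum_iterate_sub_le hmono hf hu hv
  have hslope : (fun n => slope f^[n] y x) =O[atTop] fun n => slope f^[n] q p := by
    refine .of_bound (Real.exp (L * C)) (.of_forall fun n => ?_)
    have hpos : ∀ {z w}, z ≠ w → 0 < slope f^[n] z w := fun hzw =>
      ((hmono.iterate n).strictMonoOn univ).slope_pos trivial trivial hzw
    rw [Real.norm_of_nonneg (hpos hxy.symm).le, Real.norm_of_nonneg (hpos hpq.symm).le]
    refine (hdist.iterate hmono (h.mapsTo hmono) hu hv (hsub (by simp)) (hsub (by simp))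
      (hsub (by simp)) (hsub (by simp)) hxy.symm hpq.symm n).trans ?_
    gcongr
    · exact (hpos hpq.symm).le
    · exact hC n
  simpa only [← smul_eq_mul, sub_smul_slope, vsub_eq_sub] using
    (hslope.const_mul_left (x - y)).const_mul_right (sub_ne_zero.2 hpq)

theorem hasFDerivAtFilter_nhdsWithin_prod {E F : Type*} [NormedAddCommGroup E] [NormedSpace ℝ E]
    [NormedAddCommGroup F] [NormedSpace ℝ F] {f : E → F} {f' : E → E →L[ℝ] F} {s : Set E} {x : E}
    (hs : Convex ℝ s) (hf : ∀ y ∈ s, HasFDerivWithinAt f (f' y) s y)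
    (hcont : ContinuousWithinAt f' s x) : HasFDerivAtFilter f (f' x) (𝓝[s] x ×ˢ 𝓝[s] x) := by
  rw [hasFDerivAtFilter_iff_isLittleO, isLittleO_iff]
  intro c hc
  obtain ⟨ε, hε, hball⟩ := Metric.mem_nhdsWithin_iff.1 (hcont (Metric.closedBall_mem_nhds _ hc))
  have hmem : Metric.ball x ε ∩ s ∈ 𝓝[s] x := inter_comm s _ ▸
    inter_mem_nhdsWithin s (Metric.ball_mem_nhds x hε)
  filter_upwards [prod_mem_prod hmem hmem] with ⟨y, z⟩ ⟨hy, hz⟩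
  exact ((convex_ball x ε).inter hs).norm_image_sub_le_of_norm_hasFDerivWithin_le'
    (fun w hw => (hf w hw.2).mono inter_subset_right)
    (fun w hw => dist_eq_norm (f' w) (f' x) ▸ hball hw) hz hy

theorem strictMono_of_strictMonoOn_of_eq_id {α : Type*} [LinearOrder α] {f : α → α}
    {s : Set α} [hs : s.OrdConnected]
    (hf : StrictMonoOn f s) (hfs : MapsTo f s s) (hid : ∀ x ∉ s, f x = x) : StrictMono f := by
  intro x y hxy
  by_cases hx : x ∈ s <;> by_cases hy : y ∈ s
  · exact hf hx hy hxy
  · rw [hid y hy]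
    exact not_le.1 fun hle => hy (hs.out hx (hfs hx) ⟨hxy.le, hle⟩)
  · rw [hid x hx]
    exact not_le.1 fun hle => hx (hs.out (hfs hy) hy ⟨hle, hxy.le⟩)
  · rwa [hid x hx, hid y hy]

namespace IsDiffI

variable {f g h : Equiv.Perm ℝ} {a b e x : ℝ}

theorem mapsTo (hf : IsDiffI f) : MapsTo f (Icc 0 1) (Icc 0 1) := fun x hx => by
  by_contra hfx
  exact hfx (by rwa [f.injective (hf.1 _ hfx)])

theorem differentiableOn (hf : IsDiffI f) : DifferentiableOn ℝ f (Icc 0 1) :=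
  hf.2.1.differentiableOn two_ne_zero

theorem strictMono (hf : IsDiffI f) : StrictMono f := by
  refine strictMono_of_strictMonoOn_of_eq_id (s := Icc 0 1) ?_ hf.mapsTo hf.1
  refine strictMonoOn_of_deriv_pos (convex_Icc 0 1) hf.2.1.continuousOn fun x hx => ?_
  rw [← derivWithin_of_mem_nhds (mem_interior_iff_mem_nhds.1 hx)]
  exact hf.2.2 x (interior_subset hx)

theorem continuous (hf : IsDiffI f) : Continuous f :=
  hf.strictMono.monotone.continuous_of_surjective f.surjective

theorem hasDerivAtFilter (hf : IsDiffI f) (he : e ∈ Icc (0 : ℝ) 1) {D : Set ℝ}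
    (hD : D ⊆ Icc 0 1) :
    HasDerivAtFilter f (derivWithin f (Icc 0 1) e) (𝓝[D] e ×ˢ 𝓝[D] e) := by
  have hcont : ContinuousOn (derivWithin f (Icc 0 1)) (Icc 0 1) :=
    hf.2.1.continuousOn_derivWithin (uniqueDiffOn_Icc zero_lt_one) one_le_two
  have hderiv := hasFDerivAtFilter_nhdsWithin_prod (convex_Icc 0 1)
    (fun y hy => (hf.differentiableOn y hy).hasDerivWithinAt.hasFDerivWithinAt)
    (((ContinuousLinearMap.toSpanSingletonCLE).continuous.comp_continuousOn hcont) e he)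
  exact hderiv.mono (prod_mono (nhdsWithin_mono e hD) (nhdsWithin_mono e hD))

theorem exists_slopeDistortionOn (hf : IsDiffI f) :
    ∃ L, 0 ≤ L ∧ SlopeDistortionOn f L (Icc 0 1) := by
  have hderiv : ContDiffOn ℝ 1 (derivWithin f (Icc 0 1)) (Icc 0 1) :=
    hf.2.1.derivWithin (uniqueDiffOn_Icc zero_lt_one) one_add_one_eq_two.le
  obtain ⟨K, hK⟩ := (hderiv.log fun x hx => (hf.2.2 x hx).ne').exists_lipschitzOnWith one_ne_zero
    (convex_Icc 0 1) isCompact_Icc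
  exact ⟨K, K.coe_nonneg,
    slopeDistortionOn_of_lipschitzOnWith_log_derivWithin hf.differentiableOn hf.2.2 hK⟩

theorem exists_isFixedPointGap (hf : IsDiffI f) (hfx : f x ≠ x) :
    ∃ a b, IsFixedPointGap f a b ∧ x ∈ Ioo a b := by
  have hx : x ∈ Icc (0 : ℝ) 1 := not_imp_comm.1 (hf.1 x) hfx
  exact _root_.exists_isFixedPointGap hf.continuous (a := -1) (b := 2) (hf.1 _ (by norm_num))
    (hf.1 _ (by norm_num)) ⟨by linarith [hx.1], by linarith [hx.2]⟩ hfx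

theorem exists_coordinate (hf : IsDiffI f) (hgap : IsFixedPointGap f a b) :
    ∃ W : ℝ → ℝ, InjOn W (Ioo a b) ∧ ∀ g, IsDiffI g → Function.Commute f g → IsFixedPt g a →
      IsFixedPt g b → IsAffineInCoordinate W (Ioo a b) g := by
  have hI : Icc a b ⊆ Icc 0 1 := hgap.Icc_subset_of_isClosed isClosed_Icc hf.1
  have hD : Ioo a b ⊆ Icc 0 1 := Ioo_subset_Icc_self.trans hI
  obtain ⟨L, hL, hdist⟩ := hf.exists_slopeDistortionOn
  have hcomp := hgap.iterateIncrementsComparableOn hf.strictMono hf.continuous hL (hdist.mono hD)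
  obtain ⟨e, he, hlim⟩ := hgap.exists_tendsto_iterate hf.strictMono.monotone hf.continuous
  have heI : e ∈ Icc (0 : ℝ) 1 := by
    rcases he with rfl | rfl
    exacts [hI (left_mem_Icc.2 hgap.lt.le), hI (right_mem_Icc.2 hgap.lt.le)]
  obtain ⟨p, hp, q, hq, hpq⟩ := (Ioo_infinite hgap.lt).nontrivial
  have hU : ↑(hyperfilter ℕ) ≤ (atTop : Filter ℕ) := Nat.hyperfilter_le_atTop
  obtain ⟨W, hW⟩ := hcomp.exists_isLimitCoordinate hU hp hq hpq
  refine ⟨W, hW.injOn f.injective hcomp hU hp hq hpq, fun g hg hfg hga hgb => ?_⟩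
  have hgD : MapsTo g (Ioo a b) (Ioo a b) := by
    simpa only [hga.eq, hgb.eq] using hg.strictMono.mapsTo_Ioo (a := a) (b := b)
  exact hW.isAffineInCoordinate hcomp hU hp hq hpq (hgap.mapsTo hf.strictMono) hlim hgD hfg
    (hg.hasDerivAtFilter heI hD)

theorem eqOn_id_of_commute (hf : IsDiffI f) (hg : IsDiffI g) (hfg : Function.Commute f g)
    (hgap : IsFixedPointGap f a b) (hx : x ∈ Ioo a b) (hgx : IsFixedPt g x) :
    EqOn g id (Ioo a b) := by
  let e : ℝ ≃o ℝ := hg.strictMono.orderIsoOfSurjective g g.surjective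
  have hga : IsFixedPt g a := hgap.isFixedPt_left_of_commute e hfg hx hgx
  have hgb : IsFixedPt g b := hgap.isFixedPt_right_of_commute e hfg hx hgx
  obtain ⟨W, hinj, hW⟩ := hf.exists_coordinate hgap
  exact (hW g hg hfg hga hgb).eqOn_id_of_isFixedPt hinj hx (hgap.mapsTo hf.strictMono hx)
    (hgap.ne x hx).symm hgx (hgx.map hfg)

theorem isFixedPt_of_commute (hf : IsDiffI f) (hg : IsDiffI g) (hfg : Function.Commute f g)
    (hfull : interior {x | x ∈ Icc (0 : ℝ) 1 ∧ g x = x} = ∅) (hgx : IsFixedPt g x) :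
    IsFixedPt f x := by
  by_contra hfx
  obtain ⟨a, b, hgap, hx⟩ := hf.exists_isFixedPointGap hfx
  have hid := hf.eqOn_id_of_commute hg hfg hgap hx hgx
  have hI := hgap.Icc_subset_of_isClosed isClosed_Icc hf.1
  have hsub : Ioo a b ⊆ interior {x | x ∈ Icc (0 : ℝ) 1 ∧ g x = x} :=
    interior_maximal (fun y hy => ⟨hI (Ioo_subset_Icc_self hy), hid hy⟩) isOpen_Ioo
  exact notMem_empty x (hfull ▸ hsub hx)

theorem commute_trans (hf : IsDiffI f) (hg : IsDiffI g) (hh : IsDiffI h)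
    (hfull : interior {x | x ∈ Icc (0 : ℝ) 1 ∧ f x = x} = ∅) (hgf : Commute g f)
    (hfh : Commute f h) : Commute g h := by
  have hfg' : Function.Commute f g := fun x => (DFunLike.congr_fun hgf.eq x).symm
  have hfh' : Function.Commute f h := DFunLike.congr_fun hfh.eq
  have hfix : ∀ {x}, IsFixedPt f x → IsFixedPt g x ∧ IsFixedPt h x := fun hx =>
    ⟨hg.isFixedPt_of_commute hf hfg'.symm hfull hx, hh.isFixedPt_of_commute hf hfh'.symm hfull hx⟩
  refine Equiv.ext fun x => ?_
  by_cases hfx : f x = x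
  · exact ((hfix hfx).1.comp (hfix hfx).2).trans ((hfix hfx).2.comp (hfix hfx).1).symm
  obtain ⟨a, b, hgap, hx⟩ := hf.exists_isFixedPointGap hfx
  obtain ⟨W, hinj, hW⟩ := hf.exists_coordinate hgap
  obtain ⟨hga, hha⟩ := hfix hgap.left
  obtain ⟨hgb, hhb⟩ := hfix hgap.right
  exact (hW f hf (.refl f) hgap.left hgap.right).comm_of_comm (hW g hg hfg' hga hgb)
    (hW h hh hfh' hha hhb) hinj hfg' hfh' hx hfx hx

end IsDiffI

theorem abelian_criterion_interval_general {ι : Type*} (g : ι → Equiv.Perm ℝ)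
    (hdiff : ∀ i, IsDiffI (g i))
    (hfull : ∀ i, interior {x | x ∈ Icc (0 : ℝ) 1 ∧ g i x = x} = ∅)
    (hconn : ∀ i j, Relation.ReflTransGen (fun a b => Commute (g a) (g b)) i j) :
    ∀ u ∈ Subgroup.closure (range g), ∀ v ∈ Subgroup.closure (range g), Commute u v := by
  have hcomm : ∀ i j, Commute (g i) (g j) := fun i j => by
    induction hconn i j with
    | refl => exact .refl _
    | tail _ hstep ih => exact (hdiff _).commute_trans (hdiff i) (hdiff _) (hfull _) ih hstep
  have := Subgroup.isMulCommutative_closure (k := range g) <| by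
    rintro _ ⟨i, rfl⟩ _ ⟨j, rfl⟩
    exact hcomm i j
  exact fun u hu v hv => setLike_mul_comm hu hv

/-- **Abelian criterion for the interval.** Let `g 1, …, g k` be orientation-preserving
C² diffeomorphisms of `I = [0,1]`, each fully supported (fixed point set with empty
interior).  If the commutativity graph of the generators is connected (any two indices
are joined by a chain of commuting pairs), then the group they generate is abelian. -/
theorem abelian_criterion_interval {k : ℕ} (g : Fin k → Equiv.Perm ℝ)
    (hdiff : ∀ i, IsDiffI (g i))
    (hfull : ∀ i, interior {x | x ∈ Set.Icc (0 : ℝ) 1 ∧ g i x = x} = ∅)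
    (hconn : ∀ i j : Fin k, Relation.ReflTransGen (fun a b => Commute (g a) (g b)) i j) :
    ∀ u ∈ Subgroup.closure (Set.range g), ∀ v ∈ Subgroup.closure (Set.range g),
      Commute u v :=
  abelian_criterion_interval_general g hdiff hfull hconn
end

section
/- The aba lemma: Let a and b be orientation-preserving homeomorphisms of I = [0,1], and let n₁, n₂, n₃, m₁, m₂, m₃ be integers with m₁ + m₂ ≠ m₃ such that a^{n₁} ∘ b^{m₃} ∘ a^{n₂} = b^{m₁} ∘ a^{n₃} ∘ b^{m₂}. If J is a nontrivial (nondegenerate) interval contained in Fix(a), then either J ⊆ Fix(b) or J ∩ Fix(b) = ∅. -/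
/-!
If `b` fixes a point `p` of `J`, then for every `q` in `J` one half of the `b`-orbit of `q` stays
between `p` and `q`, hence in `J`, so some `y` in the orbit has `y`, `b ^ m₂ y`, `b ^ m₃ y` in `J`.
At such a `y` all powers of `a` disappear from the relation, leaving `b ^ m₃ y = b ^ (m₁ + m₂) y`;
then `y`, and with it `q`, is periodic under `b`, and a periodic point of an increasing bijection is
fixed.
-/

section Perm

variable {α : Type*} {a b : Equiv.Perm α}

theorem zpow_apply_eq_zpow_add_apply_of_rel {n₁ n₂ n₃ m₁ m₂ m₃ : ℤ}
    (hrel : a ^ n₁ * b ^ m₃ * a ^ n₂ = b ^ m₁ * a ^ n₃ * b ^ m₂) {y : α} (hy : a y = y)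
    (hy₂ : a ((b ^ m₂) y) = (b ^ m₂) y) (hy₃ : a ((b ^ m₃) y) = (b ^ m₃) y) :
    (b ^ m₃) y = (b ^ (m₁ + m₂)) y := by
  have a_zpow_apply {x : α} (hx : a x = x) (n : ℤ) : (a ^ n) x = x :=
    Equiv.Perm.zpow_apply_eq_self_of_apply_eq_self hx n
  simpa only [Equiv.Perm.mul_apply, zpow_add, a_zpow_apply hy, a_zpow_apply hy₂,
    a_zpow_apply hy₃] using DFunLike.congr_fun hrel y

theorem zpow_sub_apply_eq_self_iff {i j : ℤ} {x : α} :
    (b ^ (i - j)) x = x ↔ (b ^ i) x = (b ^ j) x := by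
  rw [sub_eq_neg_add, zpow_add, zpow_neg, Equiv.Perm.mul_apply, Equiv.Perm.inv_eq_iff_eq]

end Perm

section LinearOrder

open Set

variable {α : Type*} [LinearOrder α]

theorem strictMono_of_strictMonoOn_of_eq_self_off {f : α → α} {s : Set α} (hs : s.OrdConnected)
    (hinj : f.Injective) (hoff : ∀ x, x ∉ s → f x = x) (hmono : StrictMonoOn f s) :
    StrictMono f := by
  have hmaps : MapsTo f s s := fun x hx ↦ by
    by_contra hfx
    exact hfx ((hinj (hoff _ hfx)).symm ▸ hx)
  intro x y hxy
  by_cases hx : x ∈ s <;> by_cases hy : y ∈ s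
  · exact hmono hx hy hxy
  · rw [hoff y hy]
    exact lt_of_not_ge fun h ↦ hy (hs.out hx (hmaps hx) ⟨hxy.le, h⟩)
  · rw [hoff x hx]
    exact lt_of_not_ge fun h ↦ hx (hs.out (hmaps hy) hy ⟨h, hxy.le⟩)
  · rwa [hoff x hx, hoff y hy]

section Monotone

variable {f : α → α} {p q : α}

theorem mapsTo_uIcc_self_of_apply_mem (hf : Monotone f) (hp : f p = p) (hq : f q ∈ uIcc p q) :
    MapsTo f (uIcc p q) (uIcc p q) := by
  have h : MapsTo f (uIcc p q) (uIcc (f p) (f q)) := hf.mapsTo_uIcc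
  rw [hp] at h
  exact h.mono_right (uIcc_subset_uIcc left_mem_uIcc hq)

theorem apply_mem_uIcc_or_mem_uIcc_apply (hf : Monotone f) (hp : f p = p) :
    f q ∈ uIcc p q ∨ q ∈ uIcc p (f q) := by
  rcases le_total p q with hpq | hqp
  · have hpf : p ≤ f q := hp ▸ hf hpq
    exact (le_total (f q) q).imp (mem_uIcc_of_le hpf) (mem_uIcc_of_le hpq)
  · have hfp : f q ≤ p := hp ▸ hf hqp
    exact (le_total q (f q)).imp (mem_uIcc_of_ge · hfp) (mem_uIcc_of_ge · hqp)

end Monotone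

section StrictMonoPerm

variable {b : Equiv.Perm α} {p q : α}

theorem zpow_apply_mem_uIcc_of_nonneg (hb : Monotone b) (hp : b p = p) (hq : b q ∈ uIcc p q)
    {k : ℤ} (hk : 0 ≤ k) : (b ^ k) q ∈ uIcc p q := by
  lift k to ℕ using hk
  exact (mapsTo_uIcc_self_of_apply_mem hb hp hq).perm_pow k right_mem_uIcc

theorem forall_nonneg_or_forall_nonpos_zpow_apply_mem_uIcc (hb : StrictMono b) (hp : b p = p)
    (q : α) :
    (∀ k : ℤ, 0 ≤ k → (b ^ k) q ∈ uIcc p q) ∨ (∀ k : ℤ, k ≤ 0 → (b ^ k) q ∈ uIcc p q) := by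
  refine (apply_mem_uIcc_or_mem_uIcc_apply hb.monotone hp).imp
    (fun hq k ↦ zpow_apply_mem_uIcc_of_nonneg hb.monotone hp hq) fun hq k hk ↦ ?_
  have hinv_mono : Monotone (b⁻¹ : Equiv.Perm α) :=
    fun x y hxy ↦ hb.le_iff_le.1 (by simpa using hxy)
  have hinv_p : b⁻¹ p = p := Equiv.Perm.inv_eq_iff_eq.2 hp.symm
  have hinv_q : b⁻¹ q ∈ uIcc p q := by
    simpa [hinv_p] using hinv_mono.mapsTo_uIcc hq
  simpa using zpow_apply_mem_uIcc_of_nonneg hinv_mono hinv_p hinv_q (neg_nonneg.2 hk)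

theorem exists_forall_zpow_add_apply_mem_uIcc (hb : StrictMono b) (hp : b p = p) (q : α)
    {s : Set ℤ} (hs : s.Finite) : ∃ k : ℤ, ∀ m ∈ s, (b ^ (m + k)) q ∈ uIcc p q := by
  rcases forall_nonneg_or_forall_nonpos_zpow_apply_mem_uIcc hb hp q with hnonneg | hnonpos
  · obtain ⟨l, hl⟩ := hs.bddBelow
    exact ⟨-l, fun m hm ↦ hnonneg _ (by linarith [hl hm])⟩
  · obtain ⟨u, hu⟩ := hs.bddAbove
    exact ⟨-u, fun m hm ↦ hnonpos _ (by linarith [hu hm])⟩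

theorem apply_eq_self_of_zpow_apply_eq_self (hb : StrictMono b) {k : ℤ} (hk : k ≠ 0)
    (h : (b ^ k) q = q) : b q = q := by
  have hpow : (b ^ k.natAbs) q = q := by
    rcases abs_choice k with hk' | hk' <;> rw [← zpow_natCast, Int.natCast_natAbs, hk']
    · exact h
    · rw [zpow_neg, Equiv.Perm.inv_eq_iff_eq, h]
  rw [Equiv.Perm.coe_pow] at hpow
  simpa [hpow] using (Function.Commute.id_right (f := b)).iterate_pos_eq_iff_map_eq
    hb.monotone strictMono_id (x := q) (Int.natAbs_pos.2 hk)

theorem zpow_apply_injective_of_apply_ne (hb : StrictMono b) (hq : b q ≠ q) :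
    Function.Injective fun k : ℤ ↦ (b ^ k) q := by
  intro i j hij
  by_contra hne
  exact hq (apply_eq_self_of_zpow_apply_eq_self hb (sub_ne_zero.2 hne)
    (zpow_sub_apply_eq_self_iff.2 hij))

end StrictMonoPerm

theorem aba_lemma_general {a b : Equiv.Perm α} (hb : StrictMono b) {n₁ n₂ n₃ m₁ m₂ m₃ : ℤ}
    (hm : m₁ + m₂ ≠ m₃) (hrel : a ^ n₁ * b ^ m₃ * a ^ n₂ = b ^ m₁ * a ^ n₃ * b ^ m₂)
    {J : Set α} (hJconn : J.OrdConnected) (hJfix : ∀ x ∈ J, a x = x) :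
    (∀ x ∈ J, b x = x) ∨ (∀ x ∈ J, b x ≠ x) := by
  refine or_iff_not_imp_right.2 fun hex q hqJ ↦ ?_
  push Not at hex
  obtain ⟨p, hpJ, hp⟩ := hex
  obtain ⟨k, hk⟩ : ∃ k : ℤ, ∀ m ∈ ({0, m₂, m₃} : Set ℤ), (b ^ (m + k)) q ∈ uIcc p q :=
    exists_forall_zpow_add_apply_mem_uIcc hb hp q (Set.toFinite _)
  simp only [zpow_add, Equiv.Perm.mul_apply] at hk
  have a_fixes {m : ℤ} (hmem : m ∈ ({0, m₂, m₃} : Set ℤ)) :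
      a ((b ^ m) ((b ^ k) q)) = (b ^ m) ((b ^ k) q) :=
    hJfix _ (hJconn.uIcc_subset hpJ hqJ (hk m hmem))
  have hpowers : (b ^ m₃) ((b ^ k) q) = (b ^ (m₁ + m₂)) ((b ^ k) q) :=
    zpow_apply_eq_zpow_add_apply_of_rel hrel (a_fixes (m := 0) (by simp)) (a_fixes (by simp))
      (a_fixes (by simp))
  simp only [← Equiv.Perm.mul_apply, ← zpow_add] at hpowers
  by_contra hq
  exact hm (add_right_cancel (zpow_apply_injective_of_apply_ne hb hq hpowers)).symm

end LinearOrder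

/-- **The `aba` lemma.** Let `a` and `b` be orientation-preserving homeomorphisms of
`I = [0,1]` (modelled as permutations of `ℝ` which are the identity off `[0,1]` and
strictly increasing on `[0,1]`; such maps are automatically homeomorphisms of `[0,1]`).
Suppose `a ^ n₁ * b ^ m₃ * a ^ n₂ = b ^ m₁ * a ^ n₃ * b ^ m₂` with `m₁ + m₂ ≠ m₃`.
If `J` is a nondegenerate interval contained in `Fix(a)`, then either `J ⊆ Fix(b)` or
`J ∩ Fix(b) = ∅`. -/
theorem aba_lemma (a b : Equiv.Perm ℝ)
    (ha_off : ∀ x, x ∉ Set.Icc (0 : ℝ) 1 → a x = x)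
    (hb_off : ∀ x, x ∉ Set.Icc (0 : ℝ) 1 → b x = x)
    (ha_mono : StrictMonoOn a (Set.Icc 0 1))
    (hb_mono : StrictMonoOn b (Set.Icc 0 1))
    (n₁ n₂ n₃ m₁ m₂ m₃ : ℤ) (hm : m₁ + m₂ ≠ m₃)
    (hrel : a ^ n₁ * b ^ m₃ * a ^ n₂ = b ^ m₁ * a ^ n₃ * b ^ m₂)
    (J : Set ℝ) (hJI : J ⊆ Set.Icc 0 1) (hJconn : J.OrdConnected)
    (hJnt : J.Nontrivial) (hJfix : ∀ x ∈ J, a x = x) :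
    (∀ x ∈ J, b x = x) ∨ (∀ x ∈ J, b x ≠ x) := by
  have hb : StrictMono b :=
    strictMono_of_strictMonoOn_of_eq_self_off Set.ordConnected_Icc b.injective hb_off hb_mono
  exact aba_lemma_general hb hm hrel hJconn hJfix
end
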